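/- Let U_i = U_q^-(𝔤) ∩ T_i(U_q^-(𝔤)) and _iU = U_q^-(𝔤) ∩ T_i^{-1}(U_q^-(𝔤)). Then U_i is stable under the operators ad_{f_i} and ad_{e_i}, and _iU is stable under ad*_{f_i} and ad*_{e_i}. -/

import Mathlib

noncomputable section

open scoped TensorProduct

/-- The field `ℚ(q)` of rational functions. -/
abbrev KK : Type := RatFunc ℚ

/-- The indeterminate `q ∈ ℚ(q)`. -/
def qq : KK := RatFunc.X

/-- `q^m` for `m ∈ ℤ`. -/
def qpow (m : ℤ) : KK := qq ^ m

/-- The quantum integer `[n]_i = (q_i^n - q_i^{-n})/(q_i - q_i^{-1})` where `q_i = q^d`. -/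
def qint (d n : ℤ) : KK := (qpow (d * n) - qpow (-(d * n))) / (qpow d - qpow (-d))

/-- The quantum factorial `[n]_i!`. -/
def qfact (d : ℤ) : ℕ → KK
  | 0 => 1
  | n + 1 => qfact d n * qint d (n + 1)

/-- A symmetrizable generalized Cartan matrix `a` with symmetrizers `d i`, so that
`(α_i, α_j) = d i * a i j`. -/
structure CartanData (I : Type) : Type where
  a : I → I → ℤ
  d : I → ℤ
  d_pos : ∀ i, 0 < d i
  a_diag : ∀ i, a i i = 2
  a_offdiag : ∀ i j, i ≠ j → a i j ≤ 0
  symm : ∀ i j, d i * a i j = d j * a j i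

/-- Generators of the quantum group `U_q(𝔤)` (adjoint form: `t i = q^{(α_i,α_i)/2 · h_i}`). -/
inductive QGen (I : Type) : Type
  | e : I → QGen I
  | f : I → QGen I
  | t : I → QGen I
  | tinv : I → QGen I

variable {I : Type}

/-- The free algebra on the generators of `U_q(𝔤)`. -/
abbrev FA (I : Type) : Type := FreeAlgebra KK (QGen I)

def ge (i : I) : FA I := FreeAlgebra.ι KK (QGen.e i)
def gf (i : I) : FA I := FreeAlgebra.ι KK (QGen.f i)
def gT (i : I) : FA I := FreeAlgebra.ι KK (QGen.t i)
def gTinv (i : I) : FA I := FreeAlgebra.ι KK (QGen.tinv i)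

/-- Divided power `e_i^{(s)}` in the free algebra. -/
def edp (C : CartanData I) (i : I) (s : ℕ) : FA I := (qfact (C.d i) s)⁻¹ • ge i ^ s

/-- Divided power `f_i^{(s)}` in the free algebra. -/
def fdp (C : CartanData I) (i : I) (s : ℕ) : FA I := (qfact (C.d i) s)⁻¹ • gf i ^ s

/-- The quantum Serre element `Σ_{s} (-1)^s e_i^{(s)} e_j e_i^{(1-a_{ij}-s)}`. -/
def serreE (C : CartanData I) (i j : I) : FA I :=
  ∑ s ∈ Finset.range ((1 - C.a i j).toNat + 1),
    ((-1 : KK) ^ s) • (edp C i s * ge j * edp C i ((1 - C.a i j).toNat - s))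

/-- The quantum Serre element `Σ_{s} (-1)^s f_i^{(s)} f_j f_i^{(1-a_{ij}-s)}`. -/
def serreF (C : CartanData I) (i j : I) : FA I :=
  ∑ s ∈ Finset.range ((1 - C.a i j).toNat + 1),
    ((-1 : KK) ^ s) • (fdp C i s * gf j * fdp C i ((1 - C.a i j).toNat - s))

/-- The defining relations of the quantum group `U_q(𝔤)`. -/
inductive QRel [DecidableEq I] (C : CartanData I) : FA I → FA I → Prop
  | t_tinv (i : I) : QRel C (gT i * gTinv i) 1
  | tinv_t (i : I) : QRel C (gTinv i * gT i) 1
  | t_t (i j : I) : QRel C (gT i * gT j) (gT j * gT i)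
  | t_tinv_comm (i j : I) : QRel C (gT i * gTinv j) (gTinv j * gT i)
  | t_e (i j : I) : QRel C (gT i * ge j) (qpow (C.d i * C.a i j) • (ge j * gT i))
  | t_f (i j : I) : QRel C (gT i * gf j) (qpow (-(C.d i * C.a i j)) • (gf j * gT i))
  | e_f (i j : I) :
      QRel C (ge i * gf j - gf j * ge i)
        (if i = j then (qpow (C.d i) - qpow (-C.d i))⁻¹ • (gT i - gTinv i) else 0)
  | serre_e (i j : I) : i ≠ j → QRel C (serreE C i j) 0
  | serre_f (i j : I) : i ≠ j → QRel C (serreF C i j) 0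

/-- The quantum group `U_q(𝔤)`, presented by generators and relations. -/
abbrev Uq [DecidableEq I] (C : CartanData I) : Type := RingQuot (QRel C)

variable [DecidableEq I]

/-- The canonical map from the free algebra onto `U_q(𝔤)`. -/
def uMk (C : CartanData I) : FA I →ₐ[KK] Uq C := RingQuot.mkAlgHom KK (QRel C)

def uE (C : CartanData I) (i : I) : Uq C := uMk C (ge i)
def uF (C : CartanData I) (i : I) : Uq C := uMk C (gf i)
def uT (C : CartanData I) (i : I) : Uq C := uMk C (gT i)
def uTinv (C : CartanData I) (i : I) : Uq C := uMk C (gTinv i)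

/-- Divided power `e_i^{(s)} ∈ U_q(𝔤)`. -/
def uEdp (C : CartanData I) (i : I) (s : ℕ) : Uq C := (qfact (C.d i) s)⁻¹ • uE C i ^ s

/-- Divided power `f_i^{(s)} ∈ U_q(𝔤)`. -/
def uFdp (C : CartanData I) (i : I) (s : ℕ) : Uq C := (qfact (C.d i) s)⁻¹ • uF C i ^ s

/-- The negative half `U_q^-(𝔤)`, the subalgebra generated by the `f_i`. -/
def Uneg (C : CartanData I) : Subalgebra KK (Uq C) :=
  Algebra.adjoin KK (Set.range (uF C))

/-- The weight `-β` component of `U_q^-(𝔤)` (spanned by monomials in the `f_i` of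
content `β ∈ Q_+`). -/
def negWt (C : CartanData I) (β : I →₀ ℕ) : Submodule KK (Uq C) :=
  Submodule.span KK
    {u | ∃ w : List I, (∀ j, w.count j = β j) ∧ u = (w.map (uF C)).prod}

/-- The pairing `(α_i, β) = Σ_j β_j (α_i, α_j)` for `β ∈ Q_+`. -/
def pairB (C : CartanData I) (i : I) (β : I →₀ ℕ) : ℤ :=
  β.sum fun j m => C.d i * C.a i j * (m : ℤ)

/-- `f_j` as an element of the subalgebra `U_q^-(𝔤)`. -/
def uFneg (C : CartanData I) (j : I) : ↥(Uneg C) :=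
  ⟨uF C j, Algebra.subset_adjoin ⟨j, rfl⟩⟩

/-- `t_i^m` for `m ∈ ℤ`. -/
def tpow (C : CartanData I) (i : I) (m : ℤ) : Uq C :=
  if 0 ≤ m then uT C i ^ m.toNat else uTinv C i ^ (-m).toNat


/-- `ad_{f_i}(u) = f_i u - t_i u t_i^{-1} f_i`. -/
def adF (C : CartanData I) (i : I) (u : Uq C) : Uq C :=
  uF C i * u - uT C i * u * uTinv C i * uF C i

/-- `ad_{e_i}(u) = e_i u t_i - u e_i t_i`. -/
def adE (C : CartanData I) (i : I) (u : Uq C) : Uq C :=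
  uE C i * u * uT C i - u * uE C i * uT C i

/-- `ad*_{f_i}(u) = u f_i - f_i t_i u t_i^{-1}`. -/
def adFstar (C : CartanData I) (i : I) (u : Uq C) : Uq C :=
  u * uF C i - uF C i * uT C i * u * uTinv C i

/-- `ad*_{e_i}(u) = u e_i t_i^{-1} - e_i u t_i^{-1}`. -/
def adEstar (C : CartanData I) (i : I) (u : Uq C) : Uq C :=
  u * uE C i * uTinv C i - uE C i * u * uTinv C i



/-! ### Generic systems of operators satisfying the relations without Serre -/

lemma qq_ne : qq ≠ 0 := RatFunc.X_ne_zero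

lemma qpow_add (a b : ℤ) : qpow (a + b) = qpow a * qpow b := zpow_add₀ qq_ne a b

lemma qpow_ne (a : ℤ) : qpow a ≠ 0 := zpow_ne_zero _ qq_ne

lemma qpow_zero : qpow 0 = 1 := zpow_zero _

lemma qpow_neg_mul (a : ℤ) : qpow (-a) * qpow a = 1 := by
  rw [← qpow_add]; simp [qpow_zero]

lemma qpow_mul_neg (a : ℤ) : qpow a * qpow (-a) = 1 := by
  rw [← qpow_add]; simp [qpow_zero]

lemma qpow_nat_ne_one (n : ℕ) (hn : 0 < n) : qpow n ≠ 1 := by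
  intro h
  have h1 : (RatFunc.X : RatFunc ℚ) ^ n = 1 := by
    simpa [qpow, qq] using h
  have h2 : algebraMap (Polynomial ℚ) (RatFunc ℚ) (Polynomial.X ^ n) =
      algebraMap (Polynomial ℚ) (RatFunc ℚ) 1 := by
    simpa [RatFunc.algebraMap_X] using h1
  have h3 := RatFunc.algebraMap_injective ℚ h2
  have h4 := congrArg Polynomial.natDegree h3
  simp at h4
  omega

lemma qpow_ne_one (m : ℤ) (hm : m ≠ 0) : qpow m ≠ 1 := by
  rcases lt_or_gt_of_ne hm with h | h
  · intro h1
    have h2 := qpow_neg_mul m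
    rw [h1, mul_one] at h2
    have := qpow_nat_ne_one (-m).toNat (by omega)
    rw [Int.toNat_of_nonneg (by omega)] at this
    exact this h2
  · have := qpow_nat_ne_one m.toNat (by omega)
    rwa [Int.toNat_of_nonneg (by omega)] at this

lemma qpow_sub_ne (m : ℤ) (hm : m ≠ 0) : qpow m - qpow (-m) ≠ 0 := by
  intro h
  have h1 : qpow m = qpow (-m) := sub_eq_zero.mp h
  have h2 : qpow (m + m) = 1 := by
    rw [qpow_add]; nth_rewrite 1 [h1]; exact qpow_neg_mul m
  exact qpow_ne_one _ (by omega) h2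

lemma qint_ne (d n : ℤ) (hd : d ≠ 0) (hn : n ≠ 0) : qint d n ≠ 0 :=
  div_ne_zero (qpow_sub_ne _ (mul_ne_zero hd hn)) (qpow_sub_ne _ hd)

lemma qfact_ne (d : ℤ) (hd : d ≠ 0) (n : ℕ) : qfact d n ≠ 0 := by
  induction n with
  | zero => simp [qfact]
  | succ n ih => exact mul_ne_zero ih (qint_ne d _ hd (by omega))

lemma qint_split (d k r : ℤ) :
    qpow (d * r) * qint d (k - r) + qpow (d * (r - k)) * qint d r = qint d k := by
  unfold qint
  rw [← mul_div_assoc, ← mul_div_assoc, ← add_div]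
  congr 1
  simp only [mul_sub, ← qpow_add]
  ring_nf

set_option linter.unusedSimpArgs false
set_option linter.unusedSectionVars false

section generic

variable {A : Type*} [Ring A] [Algebra KK A]

/-- Rank one relations. -/
structure Sl2 (d : ℤ) (e f t s : A) : Prop where
  ts : t * s = 1
  st : s * t = 1
  te : t * e = qpow (2 * d) • (e * t)
  tf : t * f = qpow (-(2 * d)) • (f * t)
  ef : e * f - f * e = (qpow d - qpow (-d))⁻¹ • (t - s)

/-- Adjoint action of `f`. -/
def gAdF (f t s : A) : A →ₗ[KK] A where
  toFun y := f * y - t * y * s * f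
  map_add' x y := by noncomm_ring
  map_smul' c x := by simp [smul_sub]

/-- Adjoint action of `e`. -/
def gAdE (e t : A) : A →ₗ[KK] A where
  toFun y := e * y * t - y * e * t
  map_add' x y := by noncomm_ring
  map_smul' c x := by simp [smul_sub]

/-- Star adjoint action of `f`. -/
def gAdFs (f t s : A) : A →ₗ[KK] A where
  toFun y := y * f - f * t * y * s
  map_add' x y := by noncomm_ring
  map_smul' c x := by simp [smul_sub]

/-- Star adjoint action of `e`. -/
def gAdEs (e s : A) : A →ₗ[KK] A where
  toFun y := y * e * s - e * y * s
  map_add' x y := by noncomm_ring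
  map_smul' c x := by simp [smul_sub]

/-- Conjugation. -/
def gCj (t s : A) : A →ₗ[KK] A where
  toFun y := t * y * s
  map_add' x y := by noncomm_ring
  map_smul' c x := by simp

lemma gAdF_apply (f t s y : A) : gAdF f t s y = f * y - t * y * s * f := rfl
lemma gAdE_apply (e t y : A) : gAdE e t y = e * y * t - y * e * t := rfl
lemma gAdFs_apply (f t s y : A) : gAdFs f t s y = y * f - f * t * y * s := rfl
lemma gAdEs_apply (e s y : A) : gAdEs e s y = y * e * s - e * y * s := rfl
lemma gCj_apply (t s y : A) : gCj t s y = t * y * s := rfl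

/-- moving the inverse past an eigenvector -/
lemma inv_comm {t s x : A} {c c' : KK} (hc : c' * c = 1) (ts : t * s = 1) (st : s * t = 1)
    (h : t * x = c • (x * t)) : s * x = c' • (x * s) := by
  have h1 : x * s = c • (s * x) := by
    calc x * s = s * (t * x) * s := by rw [← mul_assoc, st, one_mul]
      _ = c • (s * x * (t * s)) := by rw [h]; simp [mul_assoc]
      _ = _ := by rw [ts, mul_one]
  rw [h1, smul_smul, hc, one_smul]

variable {d : ℤ} {e f t s : A}

lemma Sl2.se (h : Sl2 d e f t s) : s * e = qpow (-(2 * d)) • (e * s) :=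
  inv_comm (qpow_neg_mul _) h.ts h.st h.te

lemma Sl2.sf (h : Sl2 d e f t s) : s * f = qpow (2 * d) • (f * s) :=
  inv_comm (qpow_mul_neg _) h.ts h.st h.tf

lemma Sl2.ts' (h : Sl2 d e f t s) (x : A) : t * (s * x) = x := by
  rw [← mul_assoc, h.ts, one_mul]
lemma Sl2.st' (h : Sl2 d e f t s) (x : A) : s * (t * x) = x := by
  rw [← mul_assoc, h.st, one_mul]
lemma Sl2.te' (h : Sl2 d e f t s) (x : A) : t * (e * x) = qpow (2 * d) • (e * (t * x)) := by
  rw [← mul_assoc, h.te]; simp [mul_assoc]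
lemma Sl2.tf' (h : Sl2 d e f t s) (x : A) : t * (f * x) = qpow (-(2 * d)) • (f * (t * x)) := by
  rw [← mul_assoc, h.tf]; simp [mul_assoc]
lemma Sl2.se' (h : Sl2 d e f t s) (x : A) : s * (e * x) = qpow (-(2 * d)) • (e * (s * x)) := by
  rw [← mul_assoc, h.se]; simp [mul_assoc]
lemma Sl2.sf' (h : Sl2 d e f t s) (x : A) : s * (f * x) = qpow (2 * d) • (f * (s * x)) := by
  rw [← mul_assoc, h.sf]; simp [mul_assoc]
lemma Sl2.ef1 (h : Sl2 d e f t s) :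
    e * f = f * e + (qpow d - qpow (-d))⁻¹ • (t - s) := by
  rw [← h.ef]; abel
lemma Sl2.ef' (h : Sl2 d e f t s) (x : A) :
    e * (f * x) = f * (e * x) + (qpow d - qpow (-d))⁻¹ • (t * x - s * x) := by
  rw [← mul_assoc, h.ef1]; simp [mul_assoc, add_mul, sub_mul]

lemma Sl2.adE_adF (h : Sl2 d e f t s) (y : A) :
    gAdE e t (gAdF f t s y) = gAdF f t s (gAdE e t y) +
      (qpow d - qpow (-d))⁻¹ • (gCj t s y - gCj s t y) := by
  have h1 := qpow_neg_mul (2 * d)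
  have h2 := qpow_mul_neg (2 * d)
  simp only [gAdE_apply, gAdF_apply, gCj_apply, mul_sub, sub_mul, mul_assoc, h.ts, h.st, h.te,
    h.tf, h.se, h.sf, h.ts', h.st', h.te', h.tf', h.se', h.sf', h.ef', h.ef1, mul_smul_comm,
    smul_mul_assoc, smul_smul, smul_sub, smul_add, mul_add, add_mul, mul_one, h1, h2, one_smul]
  abel

lemma Sl2.adEs_adFs (h : Sl2 d e f t s) (y : A) :
    gAdEs e s (gAdFs f t s y) = qpow (-(2 * d)) • gAdFs f t s (gAdEs e s y) +
      (qpow d - qpow (-d))⁻¹ • (gCj t s (gCj t s y) - y) := by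
  have h1 := qpow_neg_mul (2 * d)
  have h2 := qpow_mul_neg (2 * d)
  have h3 : ∀ x, qpow (-(2 * d)) * (qpow (2 * d) * x) = x := fun x => by
    rw [← mul_assoc, h1, one_mul]
  simp only [h3, gAdEs_apply, gAdFs_apply, gCj_apply, mul_sub, sub_mul, mul_assoc, h.ts, h.st, h.te,
    h.tf, h.se, h.sf, h.ts', h.st', h.te', h.tf', h.se', h.sf', h.ef', h.ef1, mul_smul_comm,
    smul_mul_assoc, smul_smul, smul_sub, smul_add, mul_add, add_mul, mul_one, h1, h2, one_smul]
  abel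

lemma Sl2.adE_mul (h : Sl2 d e f t s) (x y : A) :
    gAdE e t (x * y) = gAdE e t x * gCj s t y + x * gAdE e t y := by
  simp only [gAdE_apply, gCj_apply, mul_sub, sub_mul, mul_assoc, h.ts']
  abel

lemma Sl2.adEs_mul (h : Sl2 d e f t s) (x y : A) :
    gAdEs e s (x * y) = gAdEs e s x * gCj t s y + x * gAdEs e s y := by
  simp only [gAdEs_apply, gCj_apply, mul_sub, sub_mul, mul_assoc, h.st']
  abel

lemma Sl2.adE_cj (h : Sl2 d e f t s) (y : A) :
    gAdE e t (gCj t s y) = qpow (-(2 * d)) • gCj t s (gAdE e t y) := by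
  have h1 := qpow_neg_mul (2 * d)
  simp only [gAdE_apply, gCj_apply, mul_sub, sub_mul, mul_assoc, h.ts, h.st, h.te,
    h.se, h.ts', h.st', h.te', h.se', mul_smul_comm,
    smul_mul_assoc, smul_smul, smul_sub, mul_one, h1, one_smul]

lemma Sl2.adE_cj' (h : Sl2 d e f t s) (y : A) :
    gAdE e t (gCj s t y) = qpow (2 * d) • gCj s t (gAdE e t y) := by
  have h1 := qpow_mul_neg (2 * d)
  simp only [gAdE_apply, gCj_apply, mul_sub, sub_mul, mul_assoc, h.ts, h.st, h.te,
    h.se, h.ts', h.st', h.te', h.se', mul_smul_comm,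
    smul_mul_assoc, smul_smul, smul_sub, mul_one, h1, one_smul]

lemma Sl2.adEs_cj (h : Sl2 d e f t s) (y : A) :
    gAdEs e s (gCj t s y) = qpow (-(2 * d)) • gCj t s (gAdEs e s y) := by
  have h1 := qpow_neg_mul (2 * d)
  simp only [gAdEs_apply, gCj_apply, mul_sub, sub_mul, mul_assoc, h.ts, h.st, h.te,
    h.se, h.ts', h.st', h.te', h.se', mul_smul_comm,
    smul_mul_assoc, smul_smul, smul_sub, mul_one, h1, one_smul]

lemma Sl2.adEs_cj' (h : Sl2 d e f t s) (y : A) :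
    gAdEs e s (gCj s t y) = qpow (2 * d) • gCj s t (gAdEs e s y) := by
  have h1 := qpow_mul_neg (2 * d)
  simp only [gAdEs_apply, gCj_apply, mul_sub, sub_mul, mul_assoc, h.ts, h.st, h.te,
    h.se, h.ts', h.st', h.te', h.se', mul_smul_comm,
    smul_mul_assoc, smul_smul, smul_sub, mul_one, h1, one_smul]

lemma Sl2.cj_adF (h : Sl2 d e f t s) (y : A) :
    gCj t s (gAdF f t s y) = qpow (-(2 * d)) • gAdF f t s (gCj t s y) := by
  have h1 := qpow_neg_mul (2 * d)
  simp only [gAdF_apply, gCj_apply, mul_sub, sub_mul, mul_assoc, h.ts, h.st, h.tf,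
    h.sf, h.ts', h.st', h.tf', h.sf', mul_smul_comm,
    smul_mul_assoc, smul_smul, smul_sub, mul_one, h1, one_smul, ← mul_assoc (qpow _) (qpow _), one_mul]

end generic


/-- Relations of the quantum group without the Serre relations. -/
structure QSys {A : Type*} [Ring A] [Algebra KK A] (C : CartanData I) (e f t s : I → A) :
    Prop where
  ts : ∀ i, t i * s i = 1
  st : ∀ i, s i * t i = 1
  tt : ∀ i j, t i * t j = t j * t i
  te : ∀ i j, t i * e j = qpow (C.d i * C.a i j) • (e j * t i)
  tf : ∀ i j, t i * f j = qpow (-(C.d i * C.a i j)) • (f j * t i)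
  ef : ∀ i j, e i * f j - f j * e i =
    if i = j then (qpow (C.d i) - qpow (-C.d i))⁻¹ • (t i - s i) else 0

section qsys

variable {A : Type*} [Ring A] [Algebra KK A] {C : CartanData I} {e f t s : I → A}

lemma QSys.sl2 (h : QSys C e f t s) (i : I) : Sl2 (C.d i) (e i) (f i) (t i) (s i) where
  ts := h.ts i
  st := h.st i
  te := by rw [h.te, C.a_diag, mul_comm (C.d i)]
  tf := by rw [h.tf, C.a_diag, mul_comm (C.d i)]
  ef := by rw [h.ef, if_pos rfl]

lemma QSys.se (h : QSys C e f t s) (i j : I) :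
    s i * e j = qpow (-(C.d i * C.a i j)) • (e j * s i) :=
  inv_comm (qpow_neg_mul _) (h.ts i) (h.st i) (h.te i j)

lemma QSys.sf (h : QSys C e f t s) (i j : I) :
    s i * f j = qpow (C.d i * C.a i j) • (f j * s i) :=
  inv_comm (qpow_mul_neg _) (h.ts i) (h.st i) (h.tf i j)

lemma QSys.s_t (h : QSys C e f t s) (i j : I) : s i * t j = t j * s i := by
  have := inv_comm (c := 1) (c' := 1) (x := t j) (one_mul 1) (h.ts i) (h.st i)
    (by rw [one_smul, h.tt])
  rwa [one_smul] at this

lemma QSys.ss (h : QSys C e f t s) (i j : I) : s i * s j = s j * s i := by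
  have := inv_comm (c := 1) (c' := 1) (x := s j) (one_mul 1) (h.ts i) (h.st i)
    (by rw [one_smul, h.s_t])
  rwa [one_smul] at this

/-- The Chevalley involution. -/
lemma QSys.swap (h : QSys C e f t s) : QSys C f e s t where
  ts := h.st
  st := h.ts
  tt := h.ss
  te := h.sf
  tf := h.se
  ef i j := by
    have h1 := h.ef j i
    rw [← neg_sub, h1]
    by_cases hij : i = j
    · subst hij
      simp only [if_true]
      rw [← smul_neg, neg_sub]
    · rw [if_neg hij, if_neg (Ne.symm hij), neg_zero]

/-- divided power -/
def gdp (C : CartanData I) (f : I → A) (i : I) (n : ℕ) : A := (qfact (C.d i) n)⁻¹ • f i ^ n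

lemma mul_gdp (C : CartanData I) (f : I → A) (i : I) (n : ℕ) :
    f i * gdp C f i n = qint (C.d i) (n + 1) • gdp C f i (n + 1) := by
  have h1 := qint_ne (C.d i) ((n : ℤ) + 1) (C.d_pos i).ne' (by omega)
  simp only [gdp, qfact, mul_smul_comm, smul_smul, ← pow_succ']
  congr 1
  rw [mul_inv]
  field_simp

lemma gdp_mul (C : CartanData I) (f : I → A) (i : I) (n : ℕ) :
    gdp C f i n * f i = qint (C.d i) (n + 1) • gdp C f i (n + 1) := by
  rw [← mul_gdp]
  simp only [gdp, mul_smul_comm, smul_mul_assoc, ← pow_succ, ← pow_succ']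

/-- Conjugation weights of iterated adjoint action. -/
lemma QSys.cj_iter (h : QSys C e f t s) (i j : I) (k : ℕ) :
    gCj (t i) (s i) ((gAdF (f i) (t i) (s i))^[k] (f j)) =
      qpow (C.d i * (-C.a i j - 2 * k)) • ((gAdF (f i) (t i) (s i))^[k] (f j)) := by
  induction k with
  | zero =>
    simp only [Function.iterate_zero, id, gCj_apply, h.tf, smul_mul_assoc, mul_assoc, h.ts,
      mul_one]
    congr 2; push_cast; ring
  | succ k ih =>
    rw [Function.iterate_succ_apply', (h.sl2 i).cj_adF, ih, map_smul, smul_smul, ← qpow_add]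
    congr 2; push_cast; ring

lemma QSys.cj_iter' (h : QSys C e f t s) (i j : I) (k : ℕ) :
    gCj (s i) (t i) ((gAdF (f i) (t i) (s i))^[k] (f j)) =
      qpow (-(C.d i * (-C.a i j - 2 * k))) • ((gAdF (f i) (t i) (s i))^[k] (f j)) := by
  have h1 := congrArg (gCj (s i) (t i)) (h.cj_iter i j k)
  rw [map_smul] at h1
  have h2 : gCj (s i) (t i) (gCj (t i) (s i) ((gAdF (f i) (t i) (s i))^[k] (f j))) =
      ((gAdF (f i) (t i) (s i))^[k] (f j)) := by
    simp only [gCj_apply, mul_assoc, h.st, mul_one, (h.sl2 i).st']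
  rw [h2] at h1
  nth_rewrite 2 [h1]
  rw [smul_smul, qpow_neg_mul, one_smul]

/-- Explicit form of the iterated adjoint action. -/
lemma QSys.iter_eq (h : QSys C e f t s) (i j : I) (k : ℕ) :
    (gAdF (f i) (t i) (s i))^[k] (f j) = qfact (C.d i) k •
      ∑ r ∈ Finset.range (k + 1), ((-1 : KK) ^ r * qpow (C.d i * (r * (1 - C.a i j - k)))) •
        (gdp C f i (k - r) * f j * gdp C f i r) := by
  induction k with
  | zero => simp [qfact, gdp, qpow_zero]
  | succ k ih =>
    rw [Function.iterate_succ_apply', gAdF_apply]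
    have hw := h.cj_iter i j k
    rw [gCj_apply] at hw
    rw [hw, ih]
    simp only [mul_smul_comm, smul_mul_assoc, Finset.mul_sum, Finset.sum_mul]
    rw [smul_comm (qpow _) (qfact _ _), ← smul_sub, qfact, ← smul_smul]
    congr 1
    rw [Finset.smul_sum, Finset.smul_sum]
    have e1 : ∀ r ∈ Finset.range (k + 1 + 1),
        qint (C.d i) (k + 1) • ((-1 : KK) ^ r * qpow (C.d i * (r * (1 - C.a i j - (k + 1 : ℕ))))) •
          (gdp C f i (k + 1 - r) * f j * gdp C f i r) =
        ((-1 : KK) ^ r * qpow (C.d i * (r * (1 - C.a i j - k))) * qint (C.d i) (k + 1 - r)) •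
          (gdp C f i (k + 1 - r) * f j * gdp C f i r) +
        ((-1 : KK) ^ r * qpow (C.d i * (-C.a i j - 2 * k + (r - 1) * (1 - C.a i j - k))) *
          qint (C.d i) r) • (gdp C f i (k + 1 - r) * f j * gdp C f i r) := by
      intro r _
      rw [smul_smul, ← add_smul]
      congr 1
      rw [← qint_split (C.d i) (k + 1) r]
      have a1 : qpow (C.d i * (r * (1 - C.a i j - k))) =
        qpow (C.d i * r) * qpow (C.d i * (r * (1 - C.a i j - (k + 1 : ℕ)))) := by
        rw [← qpow_add]; congr 1; push_cast; ring
      have a2 : qpow (C.d i * (-C.a i j - 2 * k + (r - 1) * (1 - C.a i j - k))) =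
        qpow (C.d i * (r - (k + 1))) * qpow (C.d i * (r * (1 - C.a i j - (k + 1 : ℕ)))) := by
        rw [← qpow_add]; congr 1; push_cast; ring
      rw [a1, a2]
      ring
    rw [Finset.sum_congr rfl e1, Finset.sum_add_distrib, sub_eq_add_neg]
    congr 1
    · rw [Finset.sum_range_succ _ (k + 1)]
      have z : qint (C.d i) ((k : ℤ) + 1 - ((k + 1 : ℕ) : ℤ)) = 0 := by
        simp [qint]
      rw [z, mul_zero, zero_smul, add_zero]
      refine Finset.sum_congr rfl fun r hr => ?_
      have hr' : r ≤ k := by simpa [Nat.lt_succ_iff] using hr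
      obtain ⟨l, rfl⟩ := Nat.exists_eq_add_of_le hr'
      have b1 : r + l - r = l := by omega
      have b2 : r + l + 1 - r = l + 1 := by omega
      rw [b1, b2, ← mul_assoc (f i), ← mul_assoc (f i), mul_gdp]
      simp only [smul_mul_assoc, smul_smul]
      congr 3
      push_cast; ring
    · rw [Finset.sum_range_succ' _ (k + 1)]
      have z : qint (C.d i) ((0 : ℕ) : ℤ) = 0 := by simp [qint]
      rw [z, mul_zero, zero_smul, add_zero, ← Finset.sum_neg_distrib]
      refine Finset.sum_congr rfl fun r hr => ?_
      have hr' : r ≤ k := by simpa [Nat.lt_succ_iff] using hr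
      obtain ⟨l, rfl⟩ := Nat.exists_eq_add_of_le hr'
      have b1 : r + l - r = l := by omega
      have b2 : r + l + 1 - (r + 1) = l := by omega
      rw [b1, b2, mul_assoc _ _ (f i), gdp_mul]
      simp only [mul_smul_comm, smul_smul, ← neg_smul]
      congr 1
      push_cast
      rw [mul_add (C.d i), qpow_add, add_sub_cancel_right]
      ring

/-- The `ad_e` action on the string through `f_j`. -/
lemma QSys.adE_iter (h : QSys C e f t s) (i j : I) (hij : i ≠ j) (k : ℕ) :
    gAdE (e i) (t i) ((gAdF (f i) (t i) (s i))^[k + 1] (f j)) =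
      (qint (C.d i) (k + 1) * qint (C.d i) (-C.a i j - k)) •
        ((gAdF (f i) (t i) (s i))^[k] (f j)) := by
  have hz := qpow_sub_ne (C.d i) (C.d_pos i).ne'
  induction k with
  | zero =>
    have h0 : gAdE (e i) (t i) (f j) = 0 := by
      rw [gAdE_apply, ← sub_mul, h.ef, if_neg hij, zero_mul]
    rw [Function.iterate_succ_apply', (h.sl2 i).adE_adF, h.cj_iter, h.cj_iter', ← sub_smul,
      smul_smul]
    simp only [Function.iterate_zero, id]
    rw [h0, map_zero, zero_add]
    congr 1
    simp only [qint]
    field_simp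
    push_cast
    ring_nf
  | succ k ih =>
    rw [Function.iterate_succ_apply', (h.sl2 i).adE_adF, h.cj_iter, h.cj_iter', ← sub_smul,
      smul_smul, ih, map_smul, ← Function.iterate_succ_apply' (gAdF (f i) (t i) (s i)), ← add_smul]
    congr 1
    simp only [qint]
    field_simp
    simp only [sub_mul, mul_sub, ← qpow_add]
    push_cast
    ring_nf

end qsys


section serre

variable {A : Type*} [Ring A] [Algebra KK A] {C : CartanData I} {e f t s : I → A}

/-- Serre element. -/
def gSerre (C : CartanData I) (f : I → A) (i j : I) : A :=
  ∑ s ∈ Finset.range ((1 - C.a i j).toNat + 1),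
    ((-1 : KK) ^ s) • (gdp C f i s * f j * gdp C f i ((1 - C.a i j).toNat - s))

lemma QSys.iter_serre (h : QSys C e f t s) (i j : I) (hij : i ≠ j) :
    (gAdF (f i) (t i) (s i))^[(1 - C.a i j).toNat] (f j) =
      (qfact (C.d i) (1 - C.a i j).toNat * (-1) ^ (1 - C.a i j).toNat) • gSerre C f i j := by
  have ha := C.a_offdiag i j hij
  have hn : (((1 - C.a i j).toNat : ℕ) : ℤ) = 1 - C.a i j := Int.toNat_of_nonneg (by omega)
  rw [h.iter_eq, ← smul_smul, gSerre]
  congr 1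
  generalize (1 - C.a i j).toNat = n at hn
  rw [← Finset.sum_range_reflect, Finset.smul_sum]
  refine Finset.sum_congr rfl fun r hr => ?_
  have hr' : r ≤ n := by simpa [Nat.lt_succ_iff] using hr
  obtain ⟨l, rfl⟩ := Nat.exists_eq_add_of_le hr'
  have b1 : r + l + 1 - 1 - r = l := by omega
  have b2 : r + l - l = r := by omega
  have b3 : r + l - r = l := by omega
  rw [b1, b2, b3, ← hn, sub_self, mul_zero, mul_zero, qpow_zero, mul_one, smul_smul]
  congr 1
  rw [← pow_add, show r + l + r = l + 2 * r by ring, pow_add, pow_mul]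
  simp

/-- commutator with `e_k` and the adjoint action of `f_i`, `k ≠ i` -/
lemma QSys.comm_adF (h : QSys C e f t s) (i k : I) (hk : k ≠ i) (y : A) :
    e k * gAdF (f i) (t i) (s i) y - gAdF (f i) (t i) (s i) y * e k =
      f i * (e k * y - y * e k) -
        qpow (-(C.d i * C.a i k)) • (t i * (e k * y - y * e k) * s i * f i) := by
  have h1 : e k * f i = f i * e k := by
    have := h.ef k i
    rw [if_neg hk] at this
    exact sub_eq_zero.mp this
  have h2 : e k * t i = qpow (-(C.d i * C.a i k)) • (t i * e k) := by
    rw [h.te, smul_smul, qpow_neg_mul, one_smul]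
  have h1' : ∀ x, e k * (f i * x) = f i * (e k * x) := fun x => by
    rw [← mul_assoc, h1, mul_assoc]
  have h2' : ∀ x, e k * (t i * x) = qpow (-(C.d i * C.a i k)) • (t i * (e k * x)) := fun x => by
    rw [← mul_assoc, h2]; simp [mul_assoc]
  have h3 := h.se i k
  have h3' : ∀ x, s i * (e k * x) = qpow (-(C.d i * C.a i k)) • (e k * (s i * x)) := fun x => by
    rw [← mul_assoc, h3]; simp [mul_assoc]
  have e1 : t i * (y * (s i * (f i * e k))) =
      qpow (-(C.d i * C.a i k)) • (t i * (y * (e k * (s i * f i)))) := by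
    rw [← h1, h3', mul_smul_comm, mul_smul_comm]
  simp only [gAdF_apply, mul_sub, sub_mul, mul_assoc, h1', h2', smul_sub, e1]
  abel

lemma QSys.t_pow (h : QSys C e f t s) (i j : I) (l : ℕ) :
    t j * f i ^ l = qpow (-(C.d j * C.a j i) * l) • (f i ^ l * t j) := by
  induction l with
  | zero => simp [qpow_zero]
  | succ l ih =>
    rw [pow_succ, ← mul_assoc, ih, smul_mul_assoc, mul_assoc, h.tf, mul_smul_comm, smul_smul,
      ← qpow_add, mul_assoc (f i ^ l)]
    congr 2
    push_cast; ring

lemma QSys.conj_t (h : QSys C e f t s) (i j : I) (l : ℕ) :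
    t i * (f i ^ l * t j) * s i * f i =
      qpow (-(C.d i * C.a i j) - 2 * C.d i * l) • (f i ^ (l + 1) * t j) := by
  have h1 := h.t_pow i i l
  calc t i * (f i ^ l * t j) * s i * f i = (t i * f i ^ l) * (t j * (s i * f i)) := by
        simp only [mul_assoc]
    _ = _ := by
        rw [h1, (h.sl2 i).sf, mul_smul_comm, ← mul_assoc (t j), h.tf, smul_mul_assoc]
        simp only [smul_mul_assoc, mul_smul_comm, smul_smul, mul_assoc]
        rw [(h.sl2 i).tf', ← mul_assoc (t i), h.tt i j, mul_assoc (t j), h.ts, mul_one]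
        simp only [mul_smul_comm, smul_smul, ← qpow_add, pow_succ, mul_assoc]
        congr 2
        rw [C.a_diag, ← C.symm i j]; ring

lemma QSys.conj_s (h : QSys C e f t s) (i j : I) (l : ℕ) :
    t i * (f i ^ l * s j) * s i * f i =
      qpow ((C.d i * C.a i j) - 2 * C.d i * l) • (f i ^ (l + 1) * s j) := by
  have h1 := h.t_pow i i l
  calc t i * (f i ^ l * s j) * s i * f i = (t i * f i ^ l) * (s j * (s i * f i)) := by
        simp only [mul_assoc]
    _ = _ := by
        rw [h1, (h.sl2 i).sf, mul_smul_comm, ← mul_assoc (s j), h.sf, smul_mul_assoc]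
        simp only [smul_mul_assoc, mul_smul_comm, smul_smul, mul_assoc]
        rw [(h.sl2 i).tf', ← mul_assoc (t i), ← h.s_t j i, mul_assoc (s j), h.ts, mul_one]
        simp only [mul_smul_comm, smul_smul, ← qpow_add, pow_succ, mul_assoc]
        congr 2
        rw [C.a_diag, ← C.symm i j]; ring

lemma QSys.comm_iter_j (h : QSys C e f t s) (i j : I) (hij : i ≠ j) (l : ℕ) :
    ∃ x y : KK, e j * (gAdF (f i) (t i) (s i))^[l] (f j) -
        (gAdF (f i) (t i) (s i))^[l] (f j) * e j =
        x • (f i ^ l * t j) + y • (f i ^ l * s j) ∧ (1 ≤ l → y = 0) ∧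
        (1 - C.a i j ≤ l → x = 0) := by
  have ha := C.a_offdiag i j hij
  induction l with
  | zero =>
    refine ⟨(qpow (C.d j) - qpow (-C.d j))⁻¹, -(qpow (C.d j) - qpow (-C.d j))⁻¹, ?_, ?_, ?_⟩
    · simp only [Function.iterate_zero, id]
      rw [h.ef, if_pos rfl, smul_sub]
      simp [sub_eq_add_neg]
    · intro h; omega
    · intro h; push_cast at h; omega
  | succ l ih =>
    obtain ⟨x, y, h1, h2, h3⟩ := ih
    refine ⟨x * (1 - qpow (-(C.d i * C.a i j)) * qpow (-(C.d i * C.a i j) - 2 * C.d i * l)),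
      y * (1 - qpow (-(C.d i * C.a i j)) * qpow ((C.d i * C.a i j) - 2 * C.d i * l)), ?_, ?_, ?_⟩
    · rw [Function.iterate_succ_apply', h.comm_adF i j hij.symm, h1]
      simp only [mul_add, add_mul, mul_smul_comm, smul_mul_assoc, h.conj_t, h.conj_s]
      rw [← mul_assoc, ← mul_assoc, ← pow_succ']
      simp only [mul_sub, sub_smul, mul_one, smul_add, smul_smul]
      rw [mul_left_comm x, mul_left_comm y]
      abel
    · intro _
      rcases Nat.eq_zero_or_pos l with rfl | hl
      · rw [← qpow_add]
        simp [qpow_zero]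
      · rw [h2 hl, zero_mul]
    · intro hl
      by_cases hl' : 1 - C.a i j ≤ l
      · rw [h3 hl', zero_mul]
      · have : (l : ℤ) = - C.a i j := by push_cast at hl; omega
        rw [← qpow_add, this]
        have : -(C.d i * C.a i j) + (-(C.d i * C.a i j) - 2 * C.d i * -C.a i j) = 0 := by ring
        rw [this, qpow_zero, sub_self, mul_zero]

lemma QSys.comm_iter (h : QSys C e f t s) (i j k : I) (hij : i ≠ j) :
    e k * (gAdF (f i) (t i) (s i))^[(1 - C.a i j).toNat] (f j) =
      (gAdF (f i) (t i) (s i))^[(1 - C.a i j).toNat] (f j) * e k := by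
  have ha := C.a_offdiag i j hij
  rw [← sub_eq_zero]
  by_cases hk : k = i
  · subst hk
    have hn : (1 - C.a k j).toNat = (-C.a k j).toNat + 1 := by omega
    have h1 := h.adE_iter k j hij (-C.a k j).toNat
    rw [← hn, Int.toNat_of_nonneg (by omega), sub_self] at h1
    have hz : qint (C.d k) 0 = 0 := by simp [qint]
    rw [hz, mul_zero, zero_smul, gAdE_apply, ← sub_mul] at h1
    have h2 := congrArg (· * s k) h1
    simpa [mul_assoc, h.ts] using h2
  · by_cases hj : k = j
    · subst hj
      obtain ⟨x, y, h1, h2, h3⟩ := h.comm_iter_j i k hij (1 - C.a i k).toNat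
      rw [h1, h2 (by omega), h3 (by omega), zero_smul, zero_smul, add_zero]
    · generalize (1 - C.a i j).toNat = n
      induction n with
      | zero =>
        simp only [Function.iterate_zero, id]
        rw [h.ef, if_neg hj]
      | succ n ih =>
        rw [Function.iterate_succ_apply', h.comm_adF i k hk, ih]
        simp

/-- The Serre elements in the `f`s commute with the `e`s. -/
lemma QSys.comm_serre (h : QSys C e f t s) (i j k : I) (hij : i ≠ j) :
    e k * gSerre C f i j = gSerre C f i j * e k := by
  have h1 := h.comm_iter i j k hij
  rw [h.iter_serre i j hij, mul_smul_comm, smul_mul_assoc] at h1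
  have hne : (qfact (C.d i) (1 - C.a i j).toNat * (-1) ^ (1 - C.a i j).toNat : KK) ≠ 0 :=
    mul_ne_zero (qfact_ne _ (C.d_pos i).ne' _) (pow_ne_zero _ (by simp))
  exact smul_right_injective A hne h1

end serre


/-! ### Verma type modules on the free algebra -/

/-- free algebra on the `f`s -/
abbrev NFr (I : Type) : Type := FreeAlgebra KK I

lemma nfr_top {I : Type} (S : Submodule KK (NFr I)) (h1 : 1 ∈ S)
    (hm : ∀ i, ∀ x ∈ S, FreeAlgebra.ι KK i * x ∈ S) (x : NFr I) : x ∈ S := by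
  have key : ∀ x : NFr I, ∀ y ∈ S, x * y ∈ S := by
    intro x
    induction x using FreeAlgebra.induction with
    | grade0 r => intro y hy; rw [← Algebra.smul_def]; exact S.smul_mem _ hy
    | grade1 i => exact hm i
    | mul a b ha hb => intro y hy; rw [mul_assoc]; exact ha _ (hb _ hy)
    | add a b ha hb => intro y hy; rw [add_mul]; exact S.add_mem (ha _ hy) (hb _ hy)
  simpa using key x 1 h1

/-- scaling automorphism -/
def nsig (C : CartanData I) (ε : ℤ) (i : I) : NFr I →ₐ[KK] NFr I :=
  FreeAlgebra.lift KK fun j => qpow (ε * (C.d i * C.a i j)) • FreeAlgebra.ι KK j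

lemma nsig_ι (C : CartanData I) (ε : ℤ) (i j : I) :
    nsig C ε i (FreeAlgebra.ι KK j) = qpow (ε * (C.d i * C.a i j)) • FreeAlgebra.ι KK j := by
  simp [nsig]

lemma nsig_comm (C : CartanData I) (ε ε' : ℤ) (i j : I) (x : NFr I) :
    nsig C ε i (nsig C ε' j x) = nsig C ε' j (nsig C ε i x) := by
  have : (nsig C ε i).comp (nsig C ε' j) = (nsig C ε' j).comp (nsig C ε i) := by
    apply FreeAlgebra.hom_ext
    funext k
    simp only [Function.comp_apply, AlgHom.comp_apply, nsig_ι, map_smul]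
    rw [smul_comm]
  exact DFunLike.congr_fun this x

lemma nsig_inv (C : CartanData I) (ε ε' : ℤ) (hε : ε + ε' = 0) (i : I) (x : NFr I) :
    nsig C ε i (nsig C ε' i x) = x := by
  have : (nsig C ε i).comp (nsig C ε' i) = AlgHom.id KK (NFr I) := by
    apply FreeAlgebra.hom_ext
    funext k
    simp only [Function.comp_apply, AlgHom.comp_apply, nsig_ι, map_smul, smul_smul, ← qpow_add,
      AlgHom.id_apply]
    rw [← add_mul, add_comm ε' ε, hε, zero_mul, qpow_zero, one_smul]
  exact DFunLike.congr_fun this x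

/-- `t_i` on the Verma module -/
def nT (C : CartanData I) (c : KK) (i : I) : Module.End KK (NFr I) :=
  c • (nsig C (-1) i).toLinearMap

/-- `t_i^{-1}` on the Verma module -/
def nS (C : CartanData I) (c : KK) (i : I) : Module.End KK (NFr I) :=
  c⁻¹ • (nsig C 1 i).toLinearMap

/-- `f_i` on the Verma module -/
def nF (i : I) : Module.End KK (NFr I) := LinearMap.mulLeft KK (FreeAlgebra.ι KK i)

lemma nT_apply (C : CartanData I) (c : KK) (i : I) (x : NFr I) :
    nT C c i x = c • nsig C (-1) i x := rfl
lemma nS_apply (C : CartanData I) (c : KK) (i : I) (x : NFr I) :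
    nS C c i x = c⁻¹ • nsig C 1 i x := rfl
lemma nF_apply (i : I) (x : NFr I) : nF i x = FreeAlgebra.ι KK i * x := rfl

/-- the bracket `[e_i, f_i]` on the Verma module -/
def nH (C : CartanData I) (c : KK) (i j : I) : Module.End KK (NFr I) :=
  if i = j then (qpow (C.d i) - qpow (-C.d i))⁻¹ • (nT C c i - nS C c i) else 0

/-- auxiliary action on pairs -/
def nPair (C : CartanData I) (c : KK) (i : I) : NFr I →ₐ[KK] Module.End KK (NFr I × NFr I) :=
  FreeAlgebra.lift KK fun j =>
    LinearMap.prod ((nF j).comp (LinearMap.fst KK _ _))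
      ((nF j).comp (LinearMap.snd KK _ _) + (nH C c i j).comp (LinearMap.fst KK _ _))

lemma nPair_fst (C : CartanData I) (c : KK) (i : I) (u : NFr I) :
    ∀ x, (nPair C c i u x).1 = u * x.1 := by
  induction u using FreeAlgebra.induction with
  | grade0 r => intro x; simp [Algebra.smul_def]
  | grade1 j => intro x; simp [nPair, nF_apply]
  | mul a b ha hb => intro x; rw [map_mul, Module.End.mul_apply, ha, hb, mul_assoc]
  | add a b ha hb => intro x; rw [map_add, LinearMap.add_apply, Prod.fst_add, ha, hb, add_mul]

/-- `e_i` on the Verma module -/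
def nE (C : CartanData I) (c : KK) (i : I) : Module.End KK (NFr I) :=
  (LinearMap.snd KK _ _).comp ((LinearMap.applyₗ ((1, 0) : NFr I × NFr I)).comp
    (nPair C c i).toLinearMap)

lemma nE_apply (C : CartanData I) (c : KK) (i : I) (u : NFr I) :
    nE C c i u = (nPair C c i u (1, 0)).2 := rfl

lemma nE_one (C : CartanData I) (c : KK) (i : I) : nE C c i 1 = 0 := by
  rw [nE_apply, map_one]; rfl

lemma nE_mul (C : CartanData I) (c : KK) (i j : I) (u : NFr I) :
    nE C c i (FreeAlgebra.ι KK j * u) = FreeAlgebra.ι KK j * nE C c i u + nH C c i j u := by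
  rw [nE_apply, map_mul, Module.End.mul_apply]
  have : nPair C c i (FreeAlgebra.ι KK j) = LinearMap.prod ((nF j).comp (LinearMap.fst KK _ _))
      ((nF j).comp (LinearMap.snd KK _ _) + (nH C c i j).comp (LinearMap.fst KK _ _)) := by
    simp [nPair]
  rw [this]
  change FreeAlgebra.ι KK j * (nPair C c i u (1, 0)).2 + nH C c i j (nPair C c i u (1, 0)).1 = _
  rw [nPair_fst, mul_one]
  rfl

lemma nsys (C : CartanData I) (c : KK) (hc : c ≠ 0) :
    QSys C (nE C c) nF (nT C c) (nS C c) where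
  ts i := by
    ext1 x
    rw [Module.End.mul_apply, nS_apply, map_smul, nT_apply, smul_smul, inv_mul_cancel₀ hc,
      nsig_inv _ _ _ (by norm_num), one_smul]; rfl
  st i := by
    ext1 x
    rw [Module.End.mul_apply, nT_apply, map_smul, nS_apply, smul_smul, mul_inv_cancel₀ hc,
      nsig_inv _ _ _ (by norm_num), one_smul]; rfl
  tt i j := by
    ext1 x
    simp only [Module.End.mul_apply, nT_apply, map_smul, nsig_comm C _ _ i j]
  te i j := by
    apply LinearMap.ext
    intro x
    refine nfr_top (LinearMap.eqLocus (nT C c i * nE C c j)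
      (qpow (C.d i * C.a i j) • (nE C c j * nT C c i))) ?_ ?_ x
    · simp [LinearMap.mem_eqLocus, nE_one, nT_apply]
    · intro l y hy
      simp only [LinearMap.mem_eqLocus, Module.End.mul_apply, LinearMap.smul_apply] at hy ⊢
      have h1 : ∀ z, nT C c i (FreeAlgebra.ι KK l * z) =
          qpow (-(C.d i * C.a i l)) • (FreeAlgebra.ι KK l * nT C c i z) := by
        intro z
        simp only [nT_apply, map_mul, nsig_ι, neg_one_mul, smul_mul_assoc, mul_smul_comm]
        rw [smul_comm]
      have h2 : nT C c i (nH C c j l y) = nH C c j l (nT C c i y) := by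
        unfold nH
        split_ifs
        · simp only [LinearMap.smul_apply, LinearMap.sub_apply, map_smul, map_sub, nT_apply,
            nS_apply, nsig_comm C _ _ i j, smul_sub, smul_smul]
          congr 1 <;> congr 1 <;> ring
        · simp
      rw [nE_mul, map_add, h1, hy, h1, map_smul, nE_mul, h2]
      simp only [mul_smul_comm, smul_add, smul_smul, ← qpow_add]
      congr 1
      · rw [add_comm]
      · unfold nH
        split_ifs with hjl
        · subst hjl
          rw [add_neg_cancel, qpow_zero, one_smul]
        · simp
  tf i j := by
    ext1 x
    simp only [Module.End.mul_apply, LinearMap.smul_apply, nF_apply, nT_apply, map_mul, nsig_ι,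
      neg_one_mul, smul_mul_assoc, mul_smul_comm]
    rw [smul_comm]
  ef i j := by
    ext1 x
    rw [LinearMap.sub_apply, Module.End.mul_apply, Module.End.mul_apply, nF_apply, nE_mul,
      nF_apply, add_sub_cancel_left]
    rfl

lemma map_gdp {A B : Type*} [Ring A] [Algebra KK A] [Ring B] [Algebra KK B] (φ : A →ₐ[KK] B)
    (C : CartanData I) (f : I → A) (i : I) (n : ℕ) :
    φ (gdp C f i n) = gdp C (fun j => φ (f j)) i n := by
  simp [gdp]

lemma map_gSerre {A B : Type*} [Ring A] [Algebra KK A] [Ring B] [Algebra KK B] (φ : A →ₐ[KK] B)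
    (C : CartanData I) (f : I → A) (i j : I) :
    φ (gSerre C f i j) = gSerre C (fun j => φ (f j)) i j := by
  simp [gSerre, map_gdp]

/-- Serre element of the free algebra -/
def nSerre (C : CartanData I) (i j : I) : NFr I := gSerre C (FreeAlgebra.ι KK) i j

lemma nF_serre (C : CartanData I) (i j : I) (x : NFr I) :
    gSerre C nF i j x = nSerre C i j * x := by
  have := map_gSerre (Algebra.lmul KK (NFr I)) C (FreeAlgebra.ι KK) i j
  have h2 := LinearMap.congr_fun this x
  exact h2.symm

lemma nE_serre (C : CartanData I) (c : KK) (hc : c ≠ 0) (i j : I) (hij : i ≠ j) :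
    gSerre C (nE C c) i j = 0 := by
  apply LinearMap.ext
  intro x
  refine nfr_top (LinearMap.ker (gSerre C (nE C c) i j)) ?_ ?_ x
  · rw [LinearMap.mem_ker, gSerre, LinearMap.sum_apply]
    refine Finset.sum_eq_zero fun r hr => ?_
    rw [LinearMap.smul_apply, Module.End.mul_apply, Module.End.mul_apply]
    suffices nE C c j (gdp C (nE C c) i ((1 - C.a i j).toNat - r) 1) = 0 by
      rw [this, map_zero, smul_zero]
    rcases Nat.eq_zero_or_pos ((1 - C.a i j).toNat - r) with h0 | h0
    · rw [h0]; simp [gdp, nE_one]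
    · obtain ⟨n, hn⟩ := Nat.exists_eq_succ_of_ne_zero h0.ne'
      rw [hn, gdp, LinearMap.smul_apply, pow_succ, Module.End.mul_apply, nE_one]
      simp
  · intro l y hy
    rw [LinearMap.mem_ker] at hy ⊢
    have h1 := (nsys C c hc).swap.comm_serre i j l hij
    have h2 := LinearMap.congr_fun h1 y
    rw [Module.End.mul_apply, Module.End.mul_apply, hy, map_zero] at h2
    exact h2.symm

/-- The Serre ideal -/
def nJ (C : CartanData I) : Submodule KK (NFr I) :=
  Submodule.span KK {z | ∃ i j x y, i ≠ j ∧ z = x * nSerre C i j * y}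

lemma nJ_le (C : CartanData I) (g : Module.End KK (NFr I))
    (h : ∀ i j x y, i ≠ j → g (x * nSerre C i j * y) ∈ nJ C) : nJ C ≤ (nJ C).comap g := by
  refine Submodule.span_le.mpr ?_
  rintro z ⟨i, j, x, y, hij, rfl⟩
  exact h i j x y hij

lemma nJ_mem (C : CartanData I) (i j : I) (hij : i ≠ j) (x y : NFr I) :
    x * nSerre C i j * y ∈ nJ C := Submodule.subset_span ⟨i, j, x, y, hij, rfl⟩

lemma nJ_F (C : CartanData I) (i : I) : nJ C ≤ (nJ C).comap (nF i) := by
  refine nJ_le C _ fun k l x y hkl => ?_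
  rw [nF_apply, ← mul_assoc, ← mul_assoc]
  exact nJ_mem C k l hkl _ _

lemma nsig_serre (C : CartanData I) (ε : ℤ) (i k l : I) :
    ∃ c : KK, nsig C ε i (nSerre C k l) = c • nSerre C k l := by
  refine ⟨qpow (ε * (C.d i * C.a i k)) ^ (1 - C.a k l).toNat * qpow (ε * (C.d i * C.a i l)), ?_⟩
  rw [nSerre, map_gSerre, gSerre, gSerre, Finset.smul_sum]
  refine Finset.sum_congr rfl fun r hr => ?_
  have hr' : r ≤ (1 - C.a k l).toNat := by simpa [Nat.lt_succ_iff] using hr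
  obtain ⟨m, hm⟩ := Nat.exists_eq_add_of_le hr'
  rw [hm, Nat.add_sub_cancel_left]
  simp only [gdp, nsig_ι, smul_pow, mul_smul_comm, smul_mul_assoc, smul_smul]
  congr 1
  rw [pow_add]; ring

lemma nJ_sig (C : CartanData I) (ε : ℤ) (i : I) :
    nJ C ≤ (nJ C).comap (nsig C ε i).toLinearMap := by
  refine nJ_le C _ fun k l x y hkl => ?_
  obtain ⟨c, hc⟩ := nsig_serre C ε i k l
  rw [AlgHom.toLinearMap_apply, map_mul, map_mul, hc, mul_smul_comm, smul_mul_assoc]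
  exact (nJ C).smul_mem _ (nJ_mem C k l hkl _ _)

lemma nJ_T (C : CartanData I) (c : KK) (i : I) : nJ C ≤ (nJ C).comap (nT C c i) :=
  fun _ hx => (nJ C).smul_mem _ (nJ_sig C _ i hx)

lemma nJ_S (C : CartanData I) (c : KK) (i : I) : nJ C ≤ (nJ C).comap (nS C c i) :=
  fun _ hx => (nJ C).smul_mem _ (nJ_sig C _ i hx)

lemma nJ_H (C : CartanData I) (c : KK) (i j : I) : nJ C ≤ (nJ C).comap (nH C c i j) := by
  intro x hx
  rw [Submodule.mem_comap, nH]
  split_ifs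
  · exact (nJ C).smul_mem _ ((nJ C).sub_mem (nJ_T C c i hx) (nJ_S C c i hx))
  · simp

lemma nJ_E (C : CartanData I) (c : KK) (hc : c ≠ 0) (i : I) :
    nJ C ≤ (nJ C).comap (nE C c i) := by
  refine nJ_le C _ fun k l x y hkl => ?_
  rw [mul_assoc]
  refine nfr_top ((nJ C).comap ((nE C c i).comp (LinearMap.mulRight KK (nSerre C k l * y))))
    ?_ ?_ x
  · rw [Submodule.mem_comap, LinearMap.comp_apply, LinearMap.mulRight_apply, one_mul]
    have h1 := LinearMap.congr_fun ((nsys C c hc).comm_serre k l i hkl) y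
    rw [Module.End.mul_apply, Module.End.mul_apply, nF_serre, nF_serre] at h1
    rw [h1]
    simpa using nJ_mem C k l hkl 1 (nE C c i y)
  · intro m z hz
    rw [Submodule.mem_comap, LinearMap.comp_apply, LinearMap.mulRight_apply] at hz ⊢
    rw [mul_assoc, nE_mul]
    refine (nJ C).add_mem (nJ_F C m hz) (nJ_H C c i m ?_)
    rw [← mul_assoc]
    exact nJ_mem C k l hkl _ _


/-- The action of the free algebra on the quotient Verma module. -/
def vFree (C : CartanData I) (c : KK) (hc : c ≠ 0) :
    FA I →ₐ[KK] Module.End KK (NFr I ⧸ nJ C) :=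
  FreeAlgebra.lift KK fun g => match g with
    | QGen.e i => (nJ C).mapQ (nJ C) (nE C c i) (nJ_E C c hc i)
    | QGen.f i => (nJ C).mapQ (nJ C) (nF i) (nJ_F C i)
    | QGen.t i => (nJ C).mapQ (nJ C) (nT C c i) (nJ_T C c i)
    | QGen.tinv i => (nJ C).mapQ (nJ C) (nS C c i) (nJ_S C c i)

/-- The action of the free algebra on the free Verma module. -/
def vFree0 (C : CartanData I) (c : KK) : FA I →ₐ[KK] Module.End KK (NFr I) :=
  FreeAlgebra.lift KK fun g => match g with
    | QGen.e i => nE C c i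
    | QGen.f i => nF i
    | QGen.t i => nT C c i
    | QGen.tinv i => nS C c i

lemma vFree_mk (C : CartanData I) (c : KK) (hc : c ≠ 0) (w : FA I) :
    ∀ y, vFree C c hc w ((nJ C).mkQ y) = (nJ C).mkQ (vFree0 C c w y) := by
  induction w using FreeAlgebra.induction with
  | grade0 r => intro y; simp [Module.algebraMap_end_apply]
  | grade1 g =>
    intro y
    simp only [vFree, vFree0, FreeAlgebra.lift_ι_apply]
    cases g <;> rfl
  | mul a b ha hb =>
    intro y; rw [map_mul, map_mul, Module.End.mul_apply, Module.End.mul_apply, hb, ha]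
  | add a b ha hb =>
    intro y; rw [map_add, map_add, LinearMap.add_apply, LinearMap.add_apply, hb, ha, map_add]

section v0
variable (C : CartanData I) (c : KK) (i : I)
lemma v0E : vFree0 C c (ge i) = nE C c i := by simp [vFree0, ge]
lemma v0F : vFree0 C c (gf i) = nF i := by simp [vFree0, gf]
lemma v0T : vFree0 C c (gT i) = nT C c i := by simp [vFree0, gT]
lemma v0S : vFree0 C c (gTinv i) = nS C c i := by simp [vFree0, gTinv]
end v0

lemma serreE_eq (C : CartanData I) (i j : I) : serreE C i j = gSerre C ge i j := rfl
lemma serreF_eq (C : CartanData I) (i j : I) : serreF C i j = gSerre C gf i j := rfl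

lemma vFree_rel (C : CartanData I) (c : KK) (hc : c ≠ 0) (x y : FA I) (h : QRel C x y) :
    vFree C c hc x = vFree C c hc y := by
  have hs := nsys C c hc
  have key : vFree0 C c x = vFree0 C c y → vFree C c hc x = vFree C c hc y := by
    intro h0
    apply LinearMap.ext
    intro z
    obtain ⟨z, rfl⟩ := (nJ C).mkQ_surjective z
    rw [vFree_mk, vFree_mk, h0]
  cases h with
  | t_tinv i => apply key; rw [map_mul, v0T, v0S, hs.ts, map_one]
  | tinv_t i => apply key; rw [map_mul, v0T, v0S, hs.st, map_one]
  | t_t i j => apply key; rw [map_mul, map_mul, v0T, v0T, hs.tt]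
  | t_tinv_comm i j => apply key; rw [map_mul, map_mul, v0T, v0S, hs.s_t]
  | t_e i j => apply key; rw [map_smul, map_mul, map_mul, v0T, v0E, hs.te]
  | t_f i j => apply key; rw [map_smul, map_mul, map_mul, v0T, v0F, hs.tf]
  | e_f i j =>
    apply key
    rw [map_sub, map_mul, map_mul, v0E, v0F, hs.ef]
    split_ifs
    · rw [map_smul, map_sub, v0T, v0S]
    · rw [map_zero]
  | serre_e i j hij =>
    apply key
    rw [serreE_eq, map_gSerre, map_zero]
    simp only [v0E]
    exact nE_serre C c hc i j hij
  | serre_f i j hij =>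
    apply LinearMap.ext
    intro z
    obtain ⟨z, rfl⟩ := (nJ C).mkQ_surjective z
    rw [vFree_mk, serreF_eq, map_gSerre, map_zero, LinearMap.zero_apply]
    simp only [v0F]
    rw [nF_serre, Submodule.mkQ_apply, Submodule.Quotient.mk_eq_zero]
    simpa using nJ_mem C i j hij 1 z

/-- The Verma module of the quantum group. -/
def vRep (C : CartanData I) (c : KK) (hc : c ≠ 0) :
    Uq C →ₐ[KK] Module.End KK (NFr I ⧸ nJ C) :=
  RingQuot.liftAlgHom KK ⟨vFree C c hc, fun x y h => vFree_rel C c hc x y h⟩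

lemma vRep_mk (C : CartanData I) (c : KK) (hc : c ≠ 0) (w : FA I) :
    vRep C c hc (uMk C w) = vFree C c hc w := by
  simp [vRep, uMk]

/-- The map from the free algebra on the `f`s to `U`. -/
def nU (C : CartanData I) : NFr I →ₐ[KK] Uq C := FreeAlgebra.lift KK (uF C)

lemma nU_ι (C : CartanData I) (i : I) : nU C (FreeAlgebra.ι KK i) = uF C i := by simp [nU]

lemma uneg_eq (C : CartanData I) (x : Uq C) (hx : x ∈ Uneg C) : ∃ y, nU C y = x := by
  have : Uneg C ≤ (nU C).range := by
    refine Algebra.adjoin_le ?_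
    rintro _ ⟨i, rfl⟩
    exact ⟨FreeAlgebra.ι KK i, nU_ι C i⟩
  exact this hx

lemma uMk_rel (C : CartanData I) {x y : FA I} (h : QRel C x y) : uMk C x = uMk C y :=
  RingQuot.mkAlgHom_rel KK h

lemma nU_J (C : CartanData I) (x : NFr I) (hx : x ∈ nJ C) : nU C x = 0 := by
  have : nJ C ≤ LinearMap.ker (nU C).toLinearMap := by
    refine Submodule.span_le.mpr ?_
    rintro z ⟨i, j, x, y, hij, rfl⟩
    have h1 : nU C (nSerre C i j) = 0 := by
      rw [nSerre, map_gSerre]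
      simp only [nU_ι]
      have := uMk_rel C (QRel.serre_f i j hij)
      rw [serreF_eq, map_gSerre, map_zero] at this
      exact this
    simp [h1]
  exact this hx

lemma vRep_nU (C : CartanData I) (c : KK) (hc : c ≠ 0) (x : NFr I) :
    ∀ y, vRep C c hc (nU C x) ((nJ C).mkQ y) = (nJ C).mkQ (x * y) := by
  induction x using FreeAlgebra.induction with
  | grade0 r => intro y; simp [Module.algebraMap_end_apply, ← Algebra.smul_def]
  | grade1 i => intro y; rw [nU_ι, uF, vRep_mk, vFree_mk, v0F]; rfl
  | mul a b ha hb =>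
    intro y; rw [map_mul, map_mul, Module.End.mul_apply, hb, ha, mul_assoc]
  | add a b ha hb =>
    intro y; rw [map_add, map_add, LinearMap.add_apply, hb, ha, ← map_add, add_mul]

lemma vac_indep (C : CartanData I) (i : I) (X Y z : Uq C) (hX : X ∈ Uneg C) (hY : Y ∈ Uneg C)
    (h : X * (uT C i * uT C i) + Y = z * uE C i) : X = 0 ∧ Y = 0 := by
  obtain ⟨x, rfl⟩ := uneg_eq C X hX
  obtain ⟨y, rfl⟩ := uneg_eq C Y hY
  have key : ∀ c : KK, c ≠ 0 → (c * c) • x + y ∈ nJ C := by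
    intro c hc
    have h1 := LinearMap.congr_fun (congrArg (vRep C c hc) h) ((nJ C).mkQ 1)
    rw [map_add, map_mul, map_mul, map_mul, LinearMap.add_apply, Module.End.mul_apply,
      Module.End.mul_apply, Module.End.mul_apply, uE, uT, vRep_mk, vRep_mk, vFree_mk, vFree_mk,
      vFree_mk, v0E, nE_one, map_zero, map_zero, v0T, nT_apply, nT_apply] at h1
    simp only [map_one, map_smul, smul_smul, vRep_nU, mul_one] at h1
    rw [← map_smul, ← map_add, Submodule.mkQ_apply, Submodule.Quotient.mk_eq_zero] at h1
    exact h1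
  have k1 := key 1 one_ne_zero
  have k2 := key (qpow 1) (qpow_ne 1)
  have hx : x ∈ nJ C := by
    have h3 := (nJ C).sub_mem k2 k1
    rw [add_sub_add_right_eq_sub, ← sub_smul, ← qpow_add, mul_one] at h3
    exact ((nJ C).smul_mem_iff (sub_ne_zero.mpr (qpow_ne_one _ (by norm_num)))).mp h3
  have hy : y ∈ nJ C := by
    have := (nJ C).sub_mem k1 ((nJ C).smul_mem (1 * 1) hx)
    rwa [add_sub_cancel_left] at this
  exact ⟨nU_J C x hx, nU_J C y hy⟩

lemma usys (C : CartanData I) : QSys C (uE C) (uF C) (uT C) (uTinv C) where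
  ts i := by simpa [uT, uTinv] using uMk_rel C (QRel.t_tinv i)
  st i := by simpa [uT, uTinv] using uMk_rel C (QRel.tinv_t i)
  tt i j := by simpa [uT] using uMk_rel C (QRel.t_t i j)
  te i j := by simpa [uT, uE] using uMk_rel C (QRel.t_e i j)
  tf i j := by simpa [uT, uF] using uMk_rel C (QRel.t_f i j)
  ef i j := by
    have := uMk_rel C (QRel.e_f i j)
    rw [map_sub, map_mul, map_mul] at this
    rw [uE, uF, this]
    split_ifs
    · rw [map_smul, map_sub]; rfl
    · rw [map_zero]

section stable

variable {A : Type*} [Ring A] [Algebra KK A]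

/-- The largest subspace of `N` stable under `D`. -/
def gV (N : Submodule KK A) (D : A →ₗ[KK] A) : Submodule KK A :=
  sSup {S | S ≤ N ∧ S ≤ S.comap D}

lemma gV_le (N : Submodule KK A) (D : A →ₗ[KK] A) : gV N D ≤ N := sSup_le fun _ h => h.1

lemma gV_D (N : Submodule KK A) (D : A →ₗ[KK] A) : gV N D ≤ (gV N D).comap D :=
  sSup_le fun _ h => h.2.trans (Submodule.comap_mono (le_sSup h))

lemma le_gV {N S : Submodule KK A} {D : A →ₗ[KK] A} (h : S ≤ N) (h' : S ≤ S.comap D) :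
    S ≤ gV N D := le_sSup ⟨h, h'⟩

lemma gV_cj {N : Submodule KK A} {D φ : A →ₗ[KK] A} (c : KK) (hN : ∀ y ∈ N, φ y ∈ N)
    (hD : ∀ y, D (φ y) = c • φ (D y)) (y : A) (hy : y ∈ gV N D) : φ y ∈ gV N D := by
  have : (gV N D).map φ ≤ gV N D := by
    refine le_gV ?_ ?_
    · rintro _ ⟨y, hy, rfl⟩; exact hN _ (gV_le N D hy)
    · rintro _ ⟨y, hy, rfl⟩
      rw [Submodule.mem_comap, hD]
      exact Submodule.smul_mem _ _ ⟨_, gV_D N D hy, rfl⟩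
  exact this ⟨y, hy, rfl⟩

lemma gV_mul {N : Subalgebra KK A} {D φ : A →ₗ[KK] A}
    (hφ : ∀ y ∈ gV N.toSubmodule D, φ y ∈ gV N.toSubmodule D)
    (hD : ∀ x y, D (x * y) = D x * φ y + x * D y) (x y : A)
    (hx : x ∈ gV N.toSubmodule D) (hy : y ∈ gV N.toSubmodule D) :
    x * y ∈ gV N.toSubmodule D := by
  have : gV N.toSubmodule D * gV N.toSubmodule D ≤ gV N.toSubmodule D := by
    refine le_gV ?_ ?_
    · refine Submodule.mul_le.mpr fun x hx y hy => ?_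
      exact N.mul_mem (gV_le _ D hx) (gV_le _ D hy)
    · refine Submodule.mul_le.mpr fun x hx y hy => ?_
      rw [Submodule.mem_comap, hD]
      exact Submodule.add_mem _ (Submodule.mul_mem_mul (gV_D _ D hx) (hφ _ hy))
        (Submodule.mul_mem_mul hx (gV_D _ D hy))
  exact this (Submodule.mul_mem_mul hx hy)

lemma gV_adF {N : Submodule KK A} {D G : A →ₗ[KK] A} (c : KK) (hN : ∀ y ∈ N, G y ∈ N)
    (hD : ∀ y ∈ gV N D, D (G y) - c • G (D y) ∈ gV N D) (y : A) (hy : y ∈ gV N D) :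
    G y ∈ gV N D := by
  have : (gV N D) ⊔ (gV N D).map G ≤ gV N D := by
    refine le_gV ?_ ?_
    · refine sup_le (gV_le N D) ?_
      rintro _ ⟨y, hy, rfl⟩; exact hN _ (gV_le N D hy)
    · refine sup_le ((gV_D N D).trans (Submodule.comap_mono le_sup_left)) ?_
      rintro _ ⟨y, hy, rfl⟩
      rw [Submodule.mem_comap, ← sub_add_cancel (D (G y)) (c • G (D y))]
      exact Submodule.add_mem _ (Submodule.mem_sup_left (hD y hy))
        (Submodule.smul_mem _ _ (Submodule.mem_sup_right ⟨_, gV_D N D hy, rfl⟩))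
  exact this (Submodule.mem_sup_right ⟨y, hy, rfl⟩)

lemma gV_ker {N : Submodule KK A} {D : A →ₗ[KK] A} (y : A) (hy : y ∈ N) (h0 : D y = 0) :
    y ∈ gV N D := by
  have : N ⊓ LinearMap.ker D ≤ gV N D := by
    refine le_gV inf_le_left ?_
    rintro y ⟨_, h2⟩
    rw [Submodule.mem_comap, LinearMap.mem_ker.mp h2]
    exact Submodule.zero_mem _
  exact this ⟨hy, h0⟩

lemma gV_iter {V : Submodule KK A} {G : A →ₗ[KK] A} (hG : ∀ y ∈ V, G y ∈ V) (n : ℕ) (y : A)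
    (hy : y ∈ V) : G^[n] y ∈ V := by
  induction n with
  | zero => exact hy
  | succ n ih => rw [Function.iterate_succ_apply']; exact hG _ ih

lemma gW_mem (V : Submodule KK A) (e : A) (φ : A →ₐ[KK] A) (g : I → A) (h1 : (1 : A) ∈ V)
    (hg : ∀ i, ∀ v ∈ V, ∃ v' ∈ V, ∃ z, φ (g i) * v = v' + z * e) (x : A)
    (hx : x ∈ Algebra.adjoin KK (Set.range g)) : ∃ v ∈ V, ∃ z, φ x = v + z * e := by
  suffices h : ∀ v ∈ V, ∃ v' ∈ V, ∃ z, φ x * v = v' + z * e by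
    simpa using h 1 h1
  induction hx using Algebra.adjoin_induction with
  | mem x hx => obtain ⟨i, rfl⟩ := hx; exact hg i
  | algebraMap r =>
    intro v hv
    refine ⟨r • v, V.smul_mem r hv, 0, ?_⟩
    simp [Algebra.smul_def]
  | add x y _ _ hx hy =>
    intro v hv
    obtain ⟨v1, hv1, z1, e1⟩ := hx v hv
    obtain ⟨v2, hv2, z2, e2⟩ := hy v hv
    refine ⟨v1 + v2, V.add_mem hv1 hv2, z1 + z2, ?_⟩
    rw [map_add, add_mul, e1, e2]; noncomm_ring
  | mul x y _ _ hx hy =>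
    intro v hv
    obtain ⟨v2, hv2, z2, e2⟩ := hy v hv
    obtain ⟨v1, hv1, z1, e1⟩ := hx v2 hv2
    refine ⟨v1, hv1, z1 + φ x * z2, ?_⟩
    rw [map_mul, mul_assoc, e2, mul_add, e1]; noncomm_ring

end stable

section final

variable (C : CartanData I) (i : I)

lemma neg_mulU (x y : Uq C) : -x * y = -(x * y) := neg_mul x y
lemma sub_mulU (x y z : Uq C) : (x - y) * z = x * z - y * z := sub_mul x y z
lemma mul_subU (x y z : Uq C) : x * (y - z) = x * y - x * z := mul_sub x y z
lemma neg_subU (x y : Uq C) : -(x - y) = y - x := neg_sub x y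

lemma uF_mem (j : I) : uF C j ∈ Uneg C := Algebra.subset_adjoin ⟨j, rfl⟩

lemma cj_mem (x : Uq C) (hx : x ∈ Uneg C) : gCj (uT C i) (uTinv C i) x ∈ Uneg C := by
  have h := (usys C).sl2 i
  unfold Uneg at hx
  induction hx using Algebra.adjoin_induction with
  | mem x hx =>
    obtain ⟨j, rfl⟩ := hx
    rw [gCj_apply, (usys C).tf, smul_mul_assoc, mul_assoc, h.ts, mul_one]
    exact Subalgebra.smul_mem _ (uF_mem C j) _
  | algebraMap r =>
    rw [gCj_apply, ← Algebra.commutes, mul_assoc, h.ts, mul_one]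
    exact Subalgebra.algebraMap_mem _ _
  | add x y _ _ hx hy => rw [map_add]; exact add_mem hx hy
  | mul x y _ _ hx hy =>
    have := mul_mem hx hy
    simp only [gCj_apply, mul_assoc, h.st'] at this ⊢
    exact this

lemma cj_mem' (x : Uq C) (hx : x ∈ Uneg C) : gCj (uTinv C i) (uT C i) x ∈ Uneg C := by
  have h := (usys C).sl2 i
  unfold Uneg at hx
  induction hx using Algebra.adjoin_induction with
  | mem x hx =>
    obtain ⟨j, rfl⟩ := hx
    rw [gCj_apply, (usys C).sf, smul_mul_assoc, mul_assoc, h.st, mul_one]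
    exact Subalgebra.smul_mem _ (uF_mem C j) _
  | algebraMap r =>
    rw [gCj_apply, ← Algebra.commutes, mul_assoc, h.st, mul_one]
    exact Subalgebra.algebraMap_mem _ _
  | add x y _ _ hx hy => rw [map_add]; exact add_mem hx hy
  | mul x y _ _ hx hy =>
    have := mul_mem hx hy
    simp only [gCj_apply, mul_assoc, h.ts'] at this ⊢
    exact this

lemma comm_decomp (x : Uq C) (hx : x ∈ Uneg C) : ∃ X ∈ Uneg C, ∃ Y ∈ Uneg C,
    uE C i * x - x * uE C i = X * uT C i + Y * uTinv C i := by
  have h := (usys C).sl2 i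
  unfold Uneg at hx
  induction hx using Algebra.adjoin_induction with
  | mem x hx =>
    obtain ⟨j, rfl⟩ := hx
    rw [(usys C).ef]
    split_ifs with hij
    · refine ⟨(qpow (C.d i) - qpow (-C.d i))⁻¹ • 1, Subalgebra.smul_mem _ (one_mem _) _,
        -((qpow (C.d i) - qpow (-C.d i))⁻¹ • 1),
        neg_mem (Subalgebra.smul_mem _ (one_mem _) _), ?_⟩
      rw [smul_sub, neg_mulU, smul_mul_assoc, smul_mul_assoc, one_mul, one_mul, sub_eq_add_neg]
    · exact ⟨0, zero_mem _, 0, zero_mem _, by simp⟩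
  | algebraMap r =>
    exact ⟨0, zero_mem _, 0, zero_mem _, by rw [Algebra.commutes]; simp⟩
  | add x y _ _ hx hy =>
    obtain ⟨X, hX, Y, hY, h1⟩ := hx
    obtain ⟨X', hX', Y', hY', h2⟩ := hy
    refine ⟨X + X', add_mem hX hX', Y + Y', add_mem hY hY', ?_⟩
    have : uE C i * (x + y) - (x + y) * uE C i =
      (uE C i * x - x * uE C i) + (uE C i * y - y * uE C i) := by noncomm_ring
    rw [this, h1, h2]; noncomm_ring
  | mul x y hx0 hy0 hx hy =>
    obtain ⟨X, hX, Y, hY, h1⟩ := hx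
    obtain ⟨X', hX', Y', hY', h2⟩ := hy
    refine ⟨X * gCj (uT C i) (uTinv C i) y + x * X',
      add_mem (mul_mem hX (cj_mem C i y hy0)) (mul_mem hx0 hX'),
      Y * gCj (uTinv C i) (uT C i) y + x * Y',
      add_mem (mul_mem hY (cj_mem' C i y hy0)) (mul_mem hx0 hY'), ?_⟩
    have : uE C i * (x * y) - (x * y) * uE C i =
      (uE C i * x - x * uE C i) * y + x * (uE C i * y - y * uE C i) := by
      rw [sub_mulU, mul_subU]; simp only [mul_assoc]; abel
    rw [this, h1, h2]
    simp only [gCj_apply, add_mul, mul_add, mul_assoc, h.ts, h.st, mul_one]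
    abel

lemma adE_decomp (x : Uq C) (hx : x ∈ Uneg C) : ∃ X ∈ Uneg C, ∃ Y ∈ Uneg C,
    gAdE (uE C i) (uT C i) x = X * (uT C i * uT C i) + Y := by
  obtain ⟨X, hX, Y, hY, h1⟩ := comm_decomp C i x hx
  refine ⟨X, hX, Y, hY, ?_⟩
  rw [gAdE_apply, ← sub_mul, h1, add_mul, mul_assoc, mul_assoc, ((usys C).sl2 i).st, mul_one]

lemma adEs_decomp (x : Uq C) (hx : x ∈ Uneg C) : ∃ X ∈ Uneg C, ∃ Y ∈ Uneg C,
    gAdEs (uE C i) (uTinv C i) x * (uT C i * uT C i) = X * (uT C i * uT C i) + Y := by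
  have h := (usys C).sl2 i
  obtain ⟨X, hX, Y, hY, h1⟩ := comm_decomp C i x hx
  refine ⟨-X, neg_mem hX, -Y, neg_mem hY, ?_⟩
  rw [gAdEs_apply, ← sub_mul, ← neg_sub, h1]
  simp only [neg_mulU, add_mul, mul_assoc, h.st, h.st', mul_one]
  abel

/-- The largest `ad e_i`-stable subspace. -/
def uV : Submodule KK (Uq C) := gV (Uneg C).toSubmodule (gAdE (uE C i) (uT C i))
/-- The largest `ad* e_i`-stable subspace. -/
def uVs : Submodule KK (Uq C) := gV (Uneg C).toSubmodule (gAdEs (uE C i) (uTinv C i))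

lemma uV_cj (y : Uq C) (hy : y ∈ uV C i) : gCj (uT C i) (uTinv C i) y ∈ uV C i :=
  gV_cj _ (cj_mem C i) ((usys C).sl2 i).adE_cj y hy
lemma uV_cj' (y : Uq C) (hy : y ∈ uV C i) : gCj (uTinv C i) (uT C i) y ∈ uV C i :=
  gV_cj _ (cj_mem' C i) ((usys C).sl2 i).adE_cj' y hy
lemma uVs_cj (y : Uq C) (hy : y ∈ uVs C i) : gCj (uT C i) (uTinv C i) y ∈ uVs C i :=
  gV_cj _ (cj_mem C i) ((usys C).sl2 i).adEs_cj y hy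
lemma uVs_cj' (y : Uq C) (hy : y ∈ uVs C i) : gCj (uTinv C i) (uT C i) y ∈ uVs C i :=
  gV_cj _ (cj_mem' C i) ((usys C).sl2 i).adEs_cj' y hy

lemma uV_mul (x y : Uq C) (hx : x ∈ uV C i) (hy : y ∈ uV C i) : x * y ∈ uV C i :=
  gV_mul (uV_cj' C i) ((usys C).sl2 i).adE_mul x y hx hy
lemma uVs_mul (x y : Uq C) (hx : x ∈ uVs C i) (hy : y ∈ uVs C i) : x * y ∈ uVs C i :=
  gV_mul (uVs_cj C i) ((usys C).sl2 i).adEs_mul x y hx hy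

lemma adF_mem (y : Uq C) (hy : y ∈ Uneg C) :
    gAdF (uF C i) (uT C i) (uTinv C i) y ∈ Uneg C :=
  sub_mem (mul_mem (uF_mem C i) hy) (mul_mem (cj_mem C i y hy) (uF_mem C i))
lemma adFs_mem (y : Uq C) (hy : y ∈ Uneg C) :
    gAdFs (uF C i) (uT C i) (uTinv C i) y ∈ Uneg C := by
  have := mul_mem (uF_mem C i) (cj_mem C i y hy)
  rw [gCj_apply, ← mul_assoc, ← mul_assoc] at this
  exact sub_mem (mul_mem hy (uF_mem C i)) this

lemma uV_adF (y : Uq C) (hy : y ∈ uV C i) :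
    gAdF (uF C i) (uT C i) (uTinv C i) y ∈ uV C i := by
  refine gV_adF 1 (adF_mem C i) ?_ y hy
  intro y hy
  rw [((usys C).sl2 i).adE_adF, one_smul, add_sub_cancel_left]
  exact Submodule.smul_mem _ _ (Submodule.sub_mem _ (uV_cj C i y hy) (uV_cj' C i y hy))
lemma uVs_adFs (y : Uq C) (hy : y ∈ uVs C i) :
    gAdFs (uF C i) (uT C i) (uTinv C i) y ∈ uVs C i := by
  refine gV_adF (qpow (-(2 * C.d i))) (adFs_mem C i) ?_ y hy
  intro y hy
  rw [((usys C).sl2 i).adEs_adFs, add_sub_cancel_left]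
  exact Submodule.smul_mem _ _ (Submodule.sub_mem _ (uVs_cj C i _ (uVs_cj C i y hy)) hy)

lemma uV_one : 1 ∈ uV C i := gV_ker _ (one_mem (Uneg C)) (by rw [gAdE_apply]; simp)
lemma uVs_one : 1 ∈ uVs C i := gV_ker _ (one_mem (Uneg C)) (by rw [gAdEs_apply]; simp)
lemma ef_comm (j : I) (hj : j ≠ i) : uE C i * uF C j = uF C j * uE C i := by
  rw [← sub_eq_zero, (usys C).ef, if_neg hj.symm]
lemma uV_f (j : I) (hj : j ≠ i) : uF C j ∈ uV C i :=
  gV_ker _ (uF_mem C j) (by rw [gAdE_apply, ef_comm C i j hj, sub_self])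
lemma uVs_f (j : I) (hj : j ≠ i) : uF C j ∈ uVs C i :=
  gV_ker _ (uF_mem C j) (by rw [gAdEs_apply, ef_comm C i j hj, sub_self])

lemma step_V (v : Uq C) (hv : v ∈ uV C i) :
    ∃ v' ∈ uV C i, ∃ z, -(uE C i * uT C i) * v = v' + z * uE C i := by
  have h := (usys C).sl2 i
  refine ⟨-gAdE (uE C i) (uT C i) (gCj (uT C i) (uTinv C i) v),
    Submodule.neg_mem _ (gV_D _ _ (uV_cj C i v hv)), -(qpow (-(2 * C.d i)) • (uT C i * v * uTinv C i * uT C i)),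
    ?_⟩
  have h1 := qpow_neg_mul (2 * C.d i)
  simp only [gAdE_apply, gCj_apply, mul_assoc, h.st, h.st', h.te, h.se, h.se', mul_smul_comm,
    smul_mul_assoc, smul_smul, mul_one, h1, one_smul, neg_mulU]
  abel

lemma step_Vs (v : Uq C) (hv : v ∈ uVs C i) :
    ∃ v' ∈ uVs C i, ∃ z, -(uTinv C i * uE C i) * v = v' + z * uE C i := by
  have h := (usys C).sl2 i
  refine ⟨gCj (uTinv C i) (uT C i) (gAdEs (uE C i) (uTinv C i) v),
    uVs_cj' C i _ (gV_D _ _ hv), -(uTinv C i * v), ?_⟩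
  simp only [gAdEs_apply, gCj_apply, mul_assoc, mul_sub, sub_mul, h.st, mul_one, neg_mulU]
  abel

end final

section braid

lemma mul_negU (C : CartanData I) (x y : Uq C) : x * -y = -(x * y) := mul_neg x y

variable (C : CartanData I) (i : I) (T : Uq C ≃ₐ[KK] Uq C)

lemma bT_t (hTt : ∀ j : I, T (uT C j) = uT C j * tpow C i (-(C.a i j))) :
    T (uT C i) = uTinv C i := by
  have h := (usys C).sl2 i
  rw [hTt, C.a_diag, tpow, if_neg (by norm_num)]
  have : (-(-2 : ℤ)).toNat = 2 := rfl
  rw [this, pow_two, h.ts']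

lemma bT_s (hTt : T (uT C i) = uTinv C i) : T (uTinv C i) = uT C i := by
  have h := (usys C).sl2 i
  have h1 := congrArg T h.ts
  rw [map_mul, map_one, hTt] at h1
  rw [← h.ts' (T (uTinv C i)), h1, mul_one]

lemma bT_adFs (hTt : T (uT C i) = uTinv C i) (hTfi : T (uF C i) = -(uE C i * uT C i))
    (u : Uq C) : T (gAdFs (uF C i) (uT C i) (uTinv C i) u) = gAdE (uE C i) (uT C i) (T u) := by
  have h := (usys C).sl2 i
  rw [gAdFs_apply, gAdE_apply, map_sub, map_mul, map_mul, map_mul, map_mul, hTt, bT_s C i T hTt,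
    hTfi, mul_negU, neg_mulU, neg_mulU, neg_mulU, mul_assoc (uE C i), h.ts, mul_one, ← mul_assoc]
  abel

lemma bT_adEs (hTt : T (uT C i) = uTinv C i) (hTei : T (uE C i) = -(uTinv C i * uF C i))
    (u : Uq C) : T (gAdEs (uE C i) (uTinv C i) u) = qpow (2 * C.d i) •
      gAdF (uF C i) (uT C i) (uTinv C i) (gCj (uTinv C i) (uT C i) (T u)) := by
  have h := (usys C).sl2 i
  rw [gAdEs_apply, gAdF_apply, gCj_apply, map_sub, map_mul, map_mul, map_mul, map_mul,
    bT_s C i T hTt, hTei, mul_negU, neg_mulU, neg_mulU, neg_mulU]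
  have h1 := qpow_mul_neg (2 * C.d i)
  simp only [mul_assoc, h.ts, h.ts', h.st, h.st', h.tf, h.sf, h.sf', h.tf', smul_sub,
    mul_smul_comm, smul_mul_assoc, smul_smul, mul_one, h1, one_smul]
  abel

lemma bT_f (j : I) (hj : j ≠ i)
    (hTf : T (uF C j) =
      ∑ r ∈ Finset.range ((-C.a i j).toNat + 1),
        ((-1 : KK) ^ r * qpow (C.d i * (r : ℤ))) •
          (uFdp C i ((-C.a i j).toNat - r) * uF C j * uFdp C i r)) :
    T (uF C j) = (qfact (C.d i) (-C.a i j).toNat)⁻¹ •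
      (gAdF (uF C i) (uT C i) (uTinv C i))^[(-C.a i j).toNat] (uF C j) := by
  have ha := C.a_offdiag i j hj.symm
  have hm : (((-C.a i j).toNat : ℕ) : ℤ) = -C.a i j := Int.toNat_of_nonneg (by omega)
  rw [(usys C).iter_eq, smul_smul, inv_mul_cancel₀ (qfact_ne _ (C.d_pos i).ne' _), one_smul, hTf]
  refine Finset.sum_congr rfl fun r _ => ?_
  rw [hm, show (r : ℤ) * (1 - C.a i j - -C.a i j) = r by ring]
  rfl

lemma adE_adF_iter (j : I) (hj : j ≠ i) (m : ℕ) (hm : (m : ℤ) ≤ -C.a i j) :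
    ∃ c : KK, c ≠ 0 ∧ (gAdE (uE C i) (uT C i))^[m]
      ((gAdF (uF C i) (uT C i) (uTinv C i))^[m] (uF C j)) = c • uF C j := by
  induction m with
  | zero => exact ⟨1, one_ne_zero, by simp⟩
  | succ m ih =>
    obtain ⟨c, hc, h⟩ := ih (by push_cast at hm; omega)
    have hlin : ∀ (n : ℕ) (c : KK) (y : Uq C), (gAdE (uE C i) (uT C i))^[n] (c • y) =
        c • (gAdE (uE C i) (uT C i))^[n] y := by
      intro n c y
      rw [← Module.End.coe_pow, map_smul]
    refine ⟨qint (C.d i) (m + 1) * qint (C.d i) (-C.a i j - m) * c,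
      mul_ne_zero (mul_ne_zero (qint_ne _ _ (C.d_pos i).ne' (by omega))
        (qint_ne _ _ (C.d_pos i).ne' (by push_cast at hm; omega))) hc, ?_⟩
    rw [Function.iterate_succ_apply, (usys C).adE_iter i j hj.symm, hlin, h, smul_smul]

lemma bTs_f (hTt : T (uT C i) = uTinv C i) (hTfi : T (uF C i) = -(uE C i * uT C i))
    (j : I) (hj : j ≠ i) (c0 : KK) (hc0 : c0 ≠ 0)
    (hTf : T (uF C j) = c0 •
      (gAdF (uF C i) (uT C i) (uTinv C i))^[(-C.a i j).toNat] (uF C j)) :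
    T.symm (uF C j) ∈ uVs C i := by
  have ha := C.a_offdiag i j hj.symm
  set m := (-C.a i j).toNat with hm
  obtain ⟨c, hc, h⟩ := adE_adF_iter C i j hj m (by rw [hm, Int.toNat_of_nonneg (by omega)])
  have h1 : ∀ (n : ℕ) (u : Uq C), T ((gAdFs (uF C i) (uT C i) (uTinv C i))^[n] u) =
      (gAdE (uE C i) (uT C i))^[n] (T u) := by
    intro n
    induction n with
    | zero => intro u; rfl
    | succ n ih => intro u; rw [Function.iterate_succ_apply, ih, bT_adFs C i T hTt hTfi]; rfl
  have h2 := h1 m (uF C j)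
  rw [hTf, ← Module.End.coe_pow, ← Module.End.coe_pow, map_smul, Module.End.coe_pow,
    Module.End.coe_pow, h, smul_smul] at h2
  have h3 := congrArg T.symm h2
  rw [AlgEquiv.symm_apply_apply, map_smul] at h3
  have h4 : c0 * c ≠ 0 := mul_ne_zero hc0 hc
  rw [← (uVs C i).smul_mem_iff h4, ← h3]
  exact gV_iter (uVs_adFs C i) m _ (uVs_f C i j hj)

end braid

/-- Let `U_i = U_q^-(𝔤) ∩ T_i(U_q^-(𝔤))` and `_iU = U_q^-(𝔤) ∩ T_i⁻¹(U_q^-(𝔤))`, where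
`T_i` is Lusztig's braid automorphism (given on generators by the usual formulas).
Then `U_i` is stable under `ad_{f_i}` and `ad_{e_i}`, and `_iU` is stable under
`ad*_{f_i}` and `ad*_{e_i}`.  (Note `x ∈ T_i(U_q^-(𝔤)) ↔ T_i⁻¹ x ∈ U_q^-(𝔤)`, and
`x ∈ T_i⁻¹(U_q^-(𝔤)) ↔ T_i x ∈ U_q^-(𝔤)`.) -/
theorem braid_intersections_stable_under_adjoint
    (I : Type) [DecidableEq I] (C : CartanData I) (i : I)
    (T : Uq C ≃ₐ[KK] Uq C)
    (hTt : ∀ j : I, T (uT C j) = uT C j * tpow C i (-(C.a i j)))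
    (hTei : T (uE C i) = -(uTinv C i * uF C i))
    (hTfi : T (uF C i) = -(uE C i * uT C i))
    (hTe : ∀ j : I, j ≠ i → T (uE C j) =
      ∑ r ∈ Finset.range ((-C.a i j).toNat + 1),
        ((-1 : KK) ^ r * qpow (-(C.d i * (r : ℤ)))) •
          (uEdp C i r * uE C j * uEdp C i ((-C.a i j).toNat - r)))
    (hTf : ∀ j : I, j ≠ i → T (uF C j) =
      ∑ r ∈ Finset.range ((-C.a i j).toNat + 1),
        ((-1 : KK) ^ r * qpow (C.d i * (r : ℤ))) •
          (uFdp C i ((-C.a i j).toNat - r) * uF C j * uFdp C i r)) :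
    (∀ x : Uq C, x ∈ Uneg C → T.symm x ∈ Uneg C →
      (adF C i x ∈ Uneg C ∧ T.symm (adF C i x) ∈ Uneg C) ∧
      (adE C i x ∈ Uneg C ∧ T.symm (adE C i x) ∈ Uneg C)) ∧
    (∀ x : Uq C, x ∈ Uneg C → T x ∈ Uneg C →
      (adFstar C i x ∈ Uneg C ∧ T (adFstar C i x) ∈ Uneg C) ∧
      (adEstar C i x ∈ Uneg C ∧ T (adEstar C i x) ∈ Uneg C)) := by
  have h := (usys C).sl2 i
  have Tt := bT_t C i T hTt
  have Ts := bT_s C i T Tt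
  have Tf := fun j hj => bT_f C i T j hj (hTf j hj)
  have qn : ∀ n, (qfact (C.d i) n)⁻¹ ≠ 0 := fun n => inv_ne_zero (qfact_ne _ (C.d_pos i).ne' n)
  -- images of the negative part
  have W1 : ∀ x ∈ Uneg C, ∃ v ∈ uV C i, ∃ z, T x = v + z * uE C i := by
    refine gW_mem (uV C i) (uE C i) (T : Uq C →ₐ[KK] Uq C) (uF C) (uV_one C i) ?_
    intro j v hv
    change ∃ v' ∈ uV C i, ∃ z, T (uF C j) * v = v' + z * uE C i
    by_cases hj : j = i
    · rw [hj, hTfi]; exact step_V C i v hv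
    · refine ⟨T (uF C j) * v, uV_mul C i _ _ ?_ hv, 0, by rw [zero_mul, add_zero]⟩
      rw [Tf j hj]
      exact Submodule.smul_mem _ _ (gV_iter (uV_adF C i) _ _ (uV_f C i j hj))
  have Tsf : T.symm (uF C i) = -(uTinv C i * uE C i) := by
    apply T.injective
    rw [AlgEquiv.apply_symm_apply, map_neg, map_mul, Ts, hTei, mul_negU, h.ts']
    exact (neg_neg (uF C i)).symm
  have W2 : ∀ x ∈ Uneg C, ∃ v ∈ uVs C i, ∃ z, T.symm x = v + z * uE C i := by
    refine gW_mem (uVs C i) (uE C i) (T.symm : Uq C →ₐ[KK] Uq C) (uF C) (uVs_one C i) ?_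
    intro j v hv
    change ∃ v' ∈ uVs C i, ∃ z, T.symm (uF C j) * v = v' + z * uE C i
    by_cases hj : j = i
    · rw [hj, Tsf]; exact step_Vs C i v hv
    · exact ⟨T.symm (uF C j) * v,
        uVs_mul C i _ _ (bTs_f C i T Tt hTfi j hj _ (qn _) (Tf j hj)) hv, 0,
        by rw [zero_mul, add_zero]⟩
  -- key facts
  have K1 : ∀ u ∈ Uneg C, T u ∈ Uneg C → gAdE (uE C i) (uT C i) (T u) ∈ Uneg C := by
    intro u hu hx
    obtain ⟨v, hv, z, h1⟩ := W1 _ (adFs_mem C i u hu)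
    obtain ⟨X, hX, Y, hY, h2⟩ := adE_decomp C i _ hx
    rw [bT_adFs C i T Tt hTfi, h2] at h1
    have h3 := vac_indep C i X (Y - v) z hX (sub_mem hY (gV_le _ _ hv))
      (by rw [← add_sub_assoc, h1, add_sub_cancel_left])
    rw [h2, h3.1, zero_mul, zero_add]
    exact hY
  have K2' : ∀ u : Uq C, T u ∈ Uneg C → T (gAdEs (uE C i) (uTinv C i) u) ∈ Uneg C := by
    intro u hx
    rw [bT_adEs C i T Tt hTei]
    exact Subalgebra.smul_mem _ (adF_mem C i _ (cj_mem' C i _ hx)) _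
  have K2 : ∀ u ∈ Uneg C, T u ∈ Uneg C → gAdEs (uE C i) (uTinv C i) u ∈ Uneg C := by
    intro u hu hx
    obtain ⟨v, hv, z, h1⟩ := W2 _ (K2' u hx)
    rw [AlgEquiv.symm_apply_apply] at h1
    obtain ⟨X, hX, Y, hY, h2⟩ := adEs_decomp C i u hu
    have h3 := vac_indep C i (X - v) Y (qpow (-(2 * C.d i)) • qpow (-(2 * C.d i)) •
        (z * (uT C i * uT C i))) (sub_mem hX (gV_le _ _ hv)) hY (by
      have e1 := qpow_neg_mul (2 * C.d i)
      rw [sub_mulU, sub_add_eq_add_sub, ← h2, h1, add_mul, add_sub_cancel_left]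
      simp only [mul_assoc, h.te, h.te', mul_smul_comm, smul_mul_assoc, smul_smul]
      rw [← mul_assoc (qpow (-(2 * C.d i))) (qpow (2 * C.d i)), e1, one_mul, e1, one_smul])
    rw [h1]
    have h4 : gAdEs (uE C i) (uTinv C i) u = X := by
      rw [h3.2, add_zero] at h2
      have := congrArg (fun y => y * (uTinv C i * uTinv C i)) h2
      simpa only [mul_assoc, h.ts', h.ts, mul_one] using this
    rw [← h1, h4]
    exact hX
  have cjT : ∀ x, T.symm (gCj (uT C i) (uTinv C i) x) =
      gCj (uTinv C i) (uT C i) (T.symm x) := by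
    intro x
    apply T.injective
    rw [AlgEquiv.apply_symm_apply, gCj_apply, gCj_apply, map_mul, map_mul, Ts, Tt,
      AlgEquiv.apply_symm_apply]
  refine ⟨fun x hx hu => ⟨⟨adF_mem C i x hx, ?_⟩, ?_, ?_⟩,
    fun u hu hx => ⟨⟨adFs_mem C i u hu, ?_⟩, K2 u hu hx, K2' u hx⟩⟩
  · have h1 : T (gAdEs (uE C i) (uTinv C i) (T.symm (gCj (uT C i) (uTinv C i) x))) =
        qpow (2 * C.d i) • adF C i x := by
      rw [bT_adEs C i T Tt hTei, AlgEquiv.apply_symm_apply]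
      have : gCj (uTinv C i) (uT C i) (gCj (uT C i) (uTinv C i) x) = x := by
        simp only [gCj_apply, mul_assoc, h.st, h.st', mul_one]
      rw [this]; rfl
    have h2 := K2 (T.symm (gCj (uT C i) (uTinv C i) x)) (by rw [cjT]; exact cj_mem' C i _ hu)
      (by rw [AlgEquiv.apply_symm_apply]; exact cj_mem C i x hx)
    have h3 := congrArg T.symm h1
    rw [AlgEquiv.symm_apply_apply, map_smul] at h3
    rw [h3] at h2
    have h4 := Subalgebra.smul_mem _ h2 (qpow (-(2 * C.d i)))
    rwa [smul_smul, qpow_neg_mul, one_smul] at h4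
  · have := K1 (T.symm x) hu (by rwa [AlgEquiv.apply_symm_apply])
    rwa [AlgEquiv.apply_symm_apply] at this
  · have h1 := bT_adFs C i T Tt hTfi (T.symm x)
    rw [AlgEquiv.apply_symm_apply] at h1
    have h2 := congrArg T.symm h1
    rw [AlgEquiv.symm_apply_apply] at h2
    have h3 : T.symm (adE C i x) ∈ Uneg C := by
      change T.symm (gAdE (uE C i) (uT C i) x) ∈ Uneg C
      rw [← h2]
      exact adFs_mem C i _ hu
    exact h3
  · change T (gAdFs (uF C i) (uT C i) (uTinv C i) u) ∈ Uneg C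
    rw [bT_adFs C i T Tt hTfi]
    exact K1 u hu hx

end
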